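/- Let S ⊂ ℝ^k be a halfspace and Λ' an additive subgroup of ℝ^k. Suppose A ∈ (APW^k_{Λ'∩S})^{p×m} and B ∈ (APW^k_{Λ'∩S})^{p×p}, with B invertible in (APW^k_{Λ'})^{p×p}, form a left coprime pair over APW^k_{Λ'∩S}. Then: (i) the matrix function W = B^{−1}A admits a right coprime factorization W = C D^{−1} over APW^k_{Λ'∩S}, with C ∈ (APW^k_{Λ'∩S})^{p×m}, D ∈ (APW^k_{Λ'∩S})^{m×m}, and D invertible in (APW^k_{Λ'})^{m×m}; and (ii) the kernel-range identity Ker [ T(A)_{S,Λ'} −T(B)_{S,Λ'} ] = Im [ T(D)_{S,Λ'} ; T(C)_{S,Λ'} ] holds, where the left-hand side is the kernel of the row operator (f,g) ↦ T(A)_{S,Λ'}f − T(B)_{S,Λ'}g on (B^k_{S∩Λ'})^{m×1} ⊕ (B^k_{S∩Λ'})^{p×1} and the right-hand side is the range of the column operator h ↦ (T(D)_{S,Λ'}h, T(C)_{S,Λ'}h). -/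

import Mathlib

/- Almost periodic functions of `k` real variables, their Bohr-Fourier
coefficients and spectra, the Wiener algebra, and halfspaces. -/

open MeasureTheory Filter BoundedContinuousFunction

noncomputable section

/-- The Banach algebra of bounded continuous functions `ℝ^k → ℂ` (sup norm). -/
abbrev APB (k : ℕ) := BoundedContinuousFunction (Fin k → ℝ) ℂ

/-- The elementary exponential `e_λ(x) = e^{i⟨λ,x⟩}` as a bounded continuous function. -/
def apExp (k : ℕ) (lam : Fin k → ℝ) : APB k :=
  BoundedContinuousFunction.ofNormedAddCommGroup
    (fun x => Complex.exp (Complex.I * ((∑ j, lam j * x j : ℝ) : ℂ)))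
    (by fun_prop) 1
    (fun x => by
      simp [Complex.norm_exp, Complex.mul_re])

/-- `AP^k`: the closed subalgebra of `L^∞`-type bounded continuous functions
generated by all exponentials `e_λ`, `λ ∈ ℝ^k`. -/
def APalg (k : ℕ) : Subalgebra ℂ (APB k) :=
  (Algebra.adjoin ℂ (Set.range (apExp k))).topologicalClosure

/-- The Bohr-Fourier coefficient
`f_λ = lim_{T→∞} (2T)^{-k} ∫_{[-T,T]^k} e^{-i⟨λ,x⟩} f(x) dx`. -/
def bohrCoeff (k : ℕ) (f : (Fin k → ℝ) → ℂ) (lam : Fin k → ℝ) : ℂ :=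
  limUnder atTop (fun T : ℝ =>
    (((2 * T) ^ k : ℝ) : ℂ)⁻¹ *
      ∫ x in Set.Icc (fun _ => -T : Fin k → ℝ) (fun _ => T),
        Complex.exp (-(Complex.I * ((∑ j, lam j * x j : ℝ) : ℂ))) * f x)

/-- The Bohr-Fourier spectrum `σ(f) = {λ : f_λ ≠ 0}`. -/
def bohrSpectrum (k : ℕ) (f : (Fin k → ℝ) → ℂ) : Set (Fin k → ℝ) :=
  {lam | bohrCoeff k f lam ≠ 0}

/-- Membership in `AP^k_Δ = {f ∈ AP^k : σ(f) ⊆ Δ}`. -/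
def APmem (k : ℕ) (Δ : Set (Fin k → ℝ)) (f : APB k) : Prop :=
  f ∈ APalg k ∧ bohrSpectrum k ⇑f ⊆ Δ

/-- Membership in the Wiener algebra `APW^k_Δ`: almost periodic with spectrum
in `Δ` and absolutely convergent Bohr-Fourier series. -/
def APWmem (k : ℕ) (Δ : Set (Fin k → ℝ)) (f : APB k) : Prop :=
  APmem k Δ f ∧ Summable (fun lam => ‖bohrCoeff k (⇑f) lam‖)

/-- The Wiener norm `‖f‖_W = ∑_λ |f_λ|`. -/
def wienerNorm (k : ℕ) (f : (Fin k → ℝ) → ℂ) : ℝ :=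
  ∑' lam, ‖bohrCoeff k f lam‖

/-- A halfspace `S ⊂ ℝ^k`: `ℝ^k = S ∪ (-S)`, `S ∩ (-S) = {0}`, and `S` is
closed under addition and under multiplication by nonnegative reals. -/
structure IsHalfspace (k : ℕ) (S : Set (Fin k → ℝ)) : Prop where
  union : S ∪ -S = Set.univ
  inter : S ∩ -S = {0}
  add_mem : ∀ x ∈ S, ∀ y ∈ S, x + y ∈ S
  smul_mem : ∀ x ∈ S, ∀ a : ℝ, 0 ≤ a → a • x ∈ S

/- The Besicovitch space and Toeplitz operators.  The Besicovitch space `B^k`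
is the Hilbert-space completion of `AP^k` in the inner product `⟨f,g⟩=M{f·ḡ}`;
the exponentials `e_λ` form an orthonormal basis, so `(B^k_Λ)^{n×1}` is
canonically identified (via Bohr-Fourier coefficients) with `ℓ²(Fin n × Λ)`. -/

/-- The column Besicovitch space `(B^k_Λ)^{n×1} ≅ ℓ²(Fin n × Λ)`. -/
abbrev BesCol (k n : ℕ) (Λ : Set (Fin k → ℝ)) : Type :=
  lp (fun _ : Fin n × ↥Λ => ℂ) 2

/-- `T` is the Toeplitz operator
`T(F)_{S,Λ} : (B^k_{S∩Λ})^{n×1} → (B^k_{S∩Λ})^{m×1}`, `φ ↦ Π_{S∩Λ}(Fφ)`,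
characterized by its matrix with respect to the orthonormal basis of
exponentials: `⟪e_ν δ_i , T(e_μ δ_j)⟫ = (F i j)_{ν-μ}` (Bohr-Fourier
coefficient of the `(i,j)` entry at `ν - μ`). -/
def RepresentsToeplitz (k : ℕ) (S Λ : Set (Fin k → ℝ)) (m n : ℕ)
    (F : Matrix (Fin m) (Fin n) (APB k))
    (T : BesCol k n (S ∩ Λ) →L[ℂ] BesCol k m (S ∩ Λ)) : Prop :=
  ∀ (j : Fin n) (μ : ↥(S ∩ Λ)) (i : Fin m) (ν : ↥(S ∩ Λ)),
    (inner ℂ (lp.single 2 (i, ν) (1 : ℂ)) (T (lp.single 2 (j, μ) (1 : ℂ))) : ℂ) =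
      bohrCoeff k (⇑(F i j)) ((ν : Fin k → ℝ) - (μ : Fin k → ℝ))

/-- Invertibility of a continuous linear map. -/
def CLMInvertible {E F : Type*} [NormedAddCommGroup E] [NormedAddCommGroup F]
    [NormedSpace ℂ E] [NormedSpace ℂ F] (T : E →L[ℂ] F) : Prop :=
  ∃ Tinv : F →L[ℂ] E,
    Tinv.comp T = ContinuousLinearMap.id ℂ E ∧ T.comp Tinv = ContinuousLinearMap.id ℂ F

/-- The space `ℓ¹(M)`, to be equipped with the convolution product. -/
def EllOne (M : Type*) : Type _ := lp (fun _ : M => ℂ) 1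

namespace EllOne

section Module

variable {M : Type*}

instance : NormedAddCommGroup (EllOne M) :=
  inferInstanceAs (NormedAddCommGroup (lp (fun _ : M => ℂ) 1))

instance : NormedSpace ℂ (EllOne M) := inferInstanceAs (NormedSpace ℂ (lp (fun _ : M => ℂ) 1))

instance : CompleteSpace (EllOne M) := inferInstanceAs (CompleteSpace (lp (fun _ : M => ℂ) 1))

/-- The coefficients of an element of `ℓ¹(M)`. -/
def coeff (c : EllOne M) : M → ℂ := c.1

instance : CoeFun (EllOne M) (fun _ => M → ℂ) := ⟨coeff⟩

open Classical in
/-- The basis element of `ℓ¹(M)` at `μ`. -/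
def delta (μ : M) : EllOne M := lp.single 1 μ 1

open Classical in
theorem delta_apply (μ ν : M) : delta μ ν = if ν = μ then 1 else 0 :=
  Pi.single_apply μ (1 : ℂ) ν

theorem norm_delta (μ : M) : ‖delta μ‖ = 1 := by
  classical
  exact (lp.norm_single (E := fun _ : M => ℂ) zero_lt_one μ (1 : ℂ)).trans norm_one

theorem summable_norm (c : EllOne M) : Summable fun μ => ‖c μ‖ := by
  have := (memℓp_gen_iff (p := 1) (by simp)).1 (lp.memℓp c)
  simp only [ENNReal.toReal_one, Real.rpow_one] at this
  exact this

theorem norm_eq_tsum (c : EllOne M) : ‖c‖ = ∑' μ, ‖c μ‖ := by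
  have := lp.norm_eq_tsum_rpow (p := 1) (by simp) c
  simp only [ENNReal.toReal_one, Real.rpow_one, div_one] at this
  exact this

/-- An absolutely summable family as an element of `ℓ¹(M)`. -/
def mk (c : M → ℂ) (hc : Summable fun μ => ‖c μ‖) : EllOne M :=
  ⟨c, (memℓp_gen_iff (p := 1) (by simp)).2 (by simpa using hc)⟩

theorem hasSum_delta (c : EllOne M) : HasSum (fun μ => c μ • delta μ) c := by
  classical
  have h := lp.hasSum_single (p := 1) ENNReal.one_ne_top c
  have h' : (fun μ => c μ • delta μ) = fun μ => lp.single (E := fun _ : M => ℂ) 1 μ (c μ) := by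
    ext1 μ
    refine (lp.single_smul (E := fun _ : M => ℂ) 1 μ (c μ) (1 : ℂ)).symm.trans ?_
    rw [smul_eq_mul, mul_one]
  rw [h']
  exact h

variable {E : Type*} [NormedAddCommGroup E] [NormedSpace ℂ E]

theorem clm_ext {S T : EllOne M →L[ℂ] E} (h : ∀ μ, S (delta μ) = T (delta μ)) : S = T := by
  ext c
  have hS := S.hasSum (hasSum_delta c)
  have hT := T.hasSum (hasSum_delta c)
  simp only [map_smul, h] at hS hT
  exact hS.unique hT

theorem summable_smul [CompleteSpace E] {x : M → E} (hx : ∀ μ, ‖x μ‖ ≤ 1) (c : EllOne M) :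
    Summable fun μ => c μ • x μ := by
  refine Summable.of_norm_bounded (summable_norm c) fun μ => ?_
  rw [norm_smul]
  exact mul_le_of_le_one_right (norm_nonneg _) (hx μ)

/-- The universal property of `ℓ¹(M)`: a family in the unit ball of a Banach space extends to
a contraction. -/
def lift [CompleteSpace E] (x : M → E) (hx : ∀ μ, ‖x μ‖ ≤ 1) : EllOne M →L[ℂ] E :=
  LinearMap.mkContinuous
    { toFun := fun c => ∑' μ, c μ • x μ
      map_add' := fun c d => by
        rw [← (summable_smul hx c).tsum_add (summable_smul hx d)]
        exact tsum_congr fun μ => add_smul _ _ _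
      map_smul' := fun a c => by
        rw [RingHom.id_apply, ← (summable_smul hx c).tsum_const_smul a]
        exact tsum_congr fun μ => mul_smul a (c μ) (x μ) }
    1 fun c => by
      rw [one_mul, norm_eq_tsum]
      refine tsum_of_norm_bounded (summable_norm c).hasSum fun μ => ?_
      rw [norm_smul]
      exact mul_le_of_le_one_right (norm_nonneg _) (hx μ)

variable [CompleteSpace E]

theorem lift_apply (x : M → E) (hx : ∀ μ, ‖x μ‖ ≤ 1) (c : EllOne M) :
    lift x hx c = ∑' μ, c μ • x μ := rfl

theorem hasSum_lift (x : M → E) (hx : ∀ μ, ‖x μ‖ ≤ 1) (c : EllOne M) :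
    HasSum (fun μ => c μ • x μ) (lift x hx c) := (summable_smul hx c).hasSum

@[simp]
theorem lift_delta (x : M → E) (hx : ∀ μ, ‖x μ‖ ≤ 1) (μ : M) : lift x hx (delta μ) = x μ := by
  classical
  rw [lift_apply, tsum_eq_single μ fun ν hν => by rw [delta_apply, if_neg hν, zero_smul],
    delta_apply, if_pos rfl, one_smul]

theorem lift_eq_of_delta {x : M → E} {hx : ∀ μ, ‖x μ‖ ≤ 1} {T : EllOne M →L[ℂ] E}
    (h : ∀ μ, x μ = T (delta μ)) (c : EllOne M) : lift x hx c = T c := by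
  have : lift x hx = T := clm_ext fun μ => (lift_delta x hx μ).trans (h μ)
  rw [this]

theorem norm_lift_le (x : M → E) (hx : ∀ μ, ‖x μ‖ ≤ 1) : ‖lift x hx‖ ≤ 1 :=
  LinearMap.mkContinuous_norm_le _ zero_le_one _

theorem norm_lift_apply_le (x : M → E) (hx : ∀ μ, ‖x μ‖ ≤ 1) (c : EllOne M) :
    ‖lift x hx c‖ ≤ ‖c‖ := by
  simpa using (lift x hx).le_of_opNorm_le (norm_lift_le x hx) c

end Module

section Ring

variable {M : Type*} [AddCommMonoid M]

/-- Convolution on `ℓ¹(M)` as a bounded bilinear map. -/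
def mulCLM : EllOne M →L[ℂ] EllOne M →L[ℂ] EllOne M :=
  lift (fun μ => lift (fun ν => delta (μ + ν)) fun _ => (norm_delta _).le)
    fun _ => norm_lift_le _ _

@[simp]
theorem mulCLM_delta (μ ν : M) : mulCLM (delta μ) (delta ν) = delta (μ + ν) := by
  simp [mulCLM]

theorem mulCLM_comm (a b : EllOne M) : mulCLM a b = mulCLM b a := by
  have : (mulCLM : EllOne M →L[ℂ] _) = mulCLM.flip :=
    clm_ext fun μ => clm_ext fun ν => by simp [add_comm]
  exact congr($this a b)

theorem mulCLM_assoc (a b c : EllOne M) : mulCLM (mulCLM a b) c = mulCLM a (mulCLM b c) := by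
  have h₁ (μ ν : M) (c : EllOne M) :
      mulCLM (delta (μ + ν)) c = mulCLM (delta μ) (mulCLM (delta ν) c) := by
    have : mulCLM (delta (μ + ν)) = (mulCLM (delta μ)).comp (mulCLM (delta ν)) :=
      clm_ext fun ξ => by simp [add_assoc]
    exact congr($this c)
  have h₂ (μ : M) (b c : EllOne M) :
      mulCLM (mulCLM (delta μ) b) c = mulCLM (delta μ) (mulCLM b c) := by
    have : (mulCLM.flip c).comp (mulCLM (delta μ)) = (mulCLM (delta μ)).comp (mulCLM.flip c) :=
      clm_ext fun ν => by simp [h₁]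
    exact congr($this b)
  have : (mulCLM.flip c).comp (mulCLM.flip b) = mulCLM.flip (mulCLM b c) :=
    clm_ext fun μ => by simp [h₂]
  exact congr($this a)

theorem mulCLM_delta_zero (a : EllOne M) : mulCLM (delta 0) a = a := by
  have : mulCLM (delta (0 : M)) = ContinuousLinearMap.id ℂ _ := clm_ext fun μ => by simp
  exact congr($this a)

instance : NormedCommRing (EllOne M) where
  __ := (inferInstance : NormedAddCommGroup (EllOne M))
  mul a b := mulCLM a b
  one := delta 0
  left_distrib a b c := map_add (mulCLM a) b c
  right_distrib a b c := congr($(map_add mulCLM a b) c)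
  zero_mul a := congr($(map_zero mulCLM) a)
  mul_zero a := map_zero (mulCLM a)
  mul_assoc := mulCLM_assoc
  one_mul := mulCLM_delta_zero
  mul_one a := (mulCLM_comm _ _).trans (mulCLM_delta_zero a)
  mul_comm := mulCLM_comm
  norm_mul_le a b := by
    refine ((mulCLM a).le_opNorm b).trans ?_
    gcongr
    exact norm_lift_apply_le _ _ a

theorem mul_def (a b : EllOne M) : a * b = mulCLM a b := rfl

theorem one_def : (1 : EllOne M) = delta 0 := rfl

@[simp]
theorem delta_mul_delta (μ ν : M) : delta μ * delta ν = delta (μ + ν) := mulCLM_delta μ ν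

instance : NormedAlgebra ℂ (EllOne M) where
  __ := Algebra.ofModule (fun r a b => show mulCLM (r • a) b = r • mulCLM a b by
    rw [map_smul]; rfl)
    fun r a b => map_smul (mulCLM a) r b
  norm_smul_le := norm_smul_le

variable {B : Type*} [NormedRing B] [NormedAlgebra ℂ B] [CompleteSpace B]

/-- The universal property of `ℓ¹(M)` as a Banach algebra. -/
def liftHom (x : M → B) (hx : ∀ μ, ‖x μ‖ ≤ 1) (h0 : x 0 = 1)
    (hadd : ∀ μ ν, x (μ + ν) = x μ * x ν) : EllOne M →ₐ[ℂ] B :=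
  AlgHom.ofLinearMap (lift x hx).toLinearMap ((lift_delta x hx 0).trans h0) fun a b => by
    have h (μ : M) (b : EllOne M) : lift x hx (delta μ * b) = x μ * lift x hx b := by
      have : (lift x hx).comp (mulCLM (delta μ)) =
          (ContinuousLinearMap.mul ℂ B (x μ)).comp (lift x hx) :=
        clm_ext fun ν => by simp [hadd]
      exact congr($this b)
    have : (lift x hx).comp (mulCLM.flip b) =
        ((ContinuousLinearMap.mul ℂ B).flip (lift x hx b)).comp (lift x hx) :=
      clm_ext fun μ => by simpa [← mul_def] using h μ b
    exact congr($this a)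

end Ring

end EllOne

section Exponentials

variable {k : ℕ}

theorem apExp_apply (lam x : Fin k → ℝ) :
    apExp k lam x = Complex.exp (Complex.I * ((∑ j, lam j * x j : ℝ) : ℂ)) := rfl

theorem apExp_zero : apExp k 0 = 1 := by
  ext x
  simp [apExp_apply]

theorem apExp_add (lam mu : Fin k → ℝ) : apExp k (lam + mu) = apExp k lam * apExp k mu := by
  ext x
  simp [apExp_apply, add_mul, Finset.sum_add_distrib, mul_add, Complex.exp_add]

theorem norm_apExp_apply (lam x : Fin k → ℝ) : ‖apExp k lam x‖ = 1 := by
  rw [apExp_apply, mul_comm, Complex.norm_exp_ofReal_mul_I]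

theorem norm_apExp_le (lam : Fin k → ℝ) : ‖apExp k lam‖ ≤ 1 :=
  (BoundedContinuousFunction.norm_le zero_le_one).2 fun x => (norm_apExp_apply lam x).le

theorem star_apExp (lam : Fin k → ℝ) : star (apExp k lam) = apExp k (-lam) := by
  ext x
  simp [apExp_apply, ← Complex.exp_conj]

theorem apExp_apply_add (lam x y : Fin k → ℝ) :
    apExp k lam (x + y) = apExp k lam x * apExp k lam y := by
  simp [apExp_apply, mul_add, Finset.sum_add_distrib, Complex.exp_add]

theorem adjoin_apExp_le_span :
    (Algebra.adjoin ℂ (Set.range (apExp k)) : Set (APB k)) ⊆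
      Submodule.span ℂ (Set.range (apExp k)) := by
  let φ : Multiplicative (Fin k → ℝ) →* APB k :=
    { toFun := fun lam => apExp k lam.toAdd
      map_one' := apExp_zero
      map_mul' := fun _ _ => apExp_add _ _ }
  have hφ : (Submonoid.closure (Set.range (apExp k)) : Set (APB k)) ⊆ Set.range (apExp k) :=
    (Submonoid.closure_le (S := MonoidHom.mrange φ)).2 (fun _ h => h)
  intro f hf
  rw [SetLike.mem_coe, ← Subalgebra.mem_toSubmodule, Algebra.adjoin_eq_span] at hf
  exact Submodule.span_mono hφ hf

theorem apExp_mem_APalg (lam : Fin k → ℝ) : apExp k lam ∈ APalg k :=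
  Subalgebra.le_topologicalClosure _ (Algebra.subset_adjoin ⟨lam, rfl⟩)

theorem isClosed_APalg : IsClosed (APalg k : Set (APB k)) :=
  Subalgebra.isClosed_topologicalClosure _

theorem mem_of_mem_APalg (V : Submodule ℂ (APB k)) (hV : IsClosed (V : Set (APB k)))
    (h : ∀ lam, apExp k lam ∈ V) {f : APB k} (hf : f ∈ APalg k) : f ∈ V := by
  refine closure_minimal (adjoin_apExp_le_span.trans ?_) hV hf
  exact SetLike.coe_subset_coe.2 (Submodule.span_le.2 (Set.range_subset_iff.2 h))

end Exponentials

section Convergence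

variable {E : Type*} [NormedAddCommGroup E] [NormedSpace ℂ E]

theorem isClosed_setOf_tendsto_zero {u : ℝ → E →L[ℂ] ℂ} (hu : ∀ᶠ T in atTop, ‖u T‖ ≤ 1) :
    IsClosed {f : E | Tendsto (fun T => u T f) atTop (nhds 0)} := by
  refine isClosed_of_closure_subset fun f hf => ?_
  refine Metric.tendsto_nhds.2 fun ε hε => ?_
  obtain ⟨g, hg, hfg⟩ := Metric.mem_closure_iff.1 hf (ε / 2) (half_pos hε)
  filter_upwards [hu, Metric.tendsto_nhds.1 hg (ε / 2) (half_pos hε)] with T hT hgT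
  rw [dist_zero_right] at hgT ⊢
  have h₁ : ‖u T (f - g)‖ ≤ ‖f - g‖ := by simpa using (u T).le_of_opNorm_le hT (f - g)
  rw [dist_eq_norm] at hfg
  calc ‖u T f‖ = ‖u T (f - g) + u T g‖ := by rw [map_sub, sub_add_cancel]
    _ ≤ ‖u T (f - g)‖ + ‖u T g‖ := norm_add_le _ _
    _ < ε := by linarith

theorem isClosed_setOf_exists_tendsto {u : ℝ → E →L[ℂ] ℂ} (hu : ∀ᶠ T in atTop, ‖u T‖ ≤ 1) :
    IsClosed {f : E | ∃ a, Tendsto (fun T => u T f) atTop (nhds a)} := by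
  refine isClosed_of_closure_subset fun f hf => ?_
  refine cauchySeq_tendsto_of_complete (Metric.cauchySeq_iff'.2 fun ε hε => ?_)
  obtain ⟨g, ⟨a, hg⟩, hfg⟩ := Metric.mem_closure_iff.1 hf (ε / 4) (by positivity)
  obtain ⟨N, hN⟩ := eventually_atTop.1 (hu.and (Metric.tendsto_nhds.1 hg (ε / 4) (by positivity)))
  have h (T : ℝ) (hT : T ≥ N) : dist (u T f) a < ε / 2 := by
    have h₁ : ‖u T (f - g)‖ ≤ ‖f - g‖ := by simpa using (u T).le_of_opNorm_le (hN T hT).1 (f - g)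
    have h₂ := (hN T hT).2
    rw [dist_eq_norm] at hfg
    rw [map_sub, ← dist_eq_norm] at h₁
    linarith [dist_triangle (u T f) (u T g) a]
  refine ⟨N, fun T hT => ?_⟩
  linarith [dist_triangle_right (u T f) (u N f) a, h T hT, h N le_rfl]

end Convergence

section Mean

variable (k : ℕ)

/-- The cube `[-T, T]^k`. -/
abbrev box (T : ℝ) : Set (Fin k → ℝ) := Set.Icc (fun _ => -T) (fun _ => T)

variable {k}

theorem measureReal_box {T : ℝ} (hT : 0 ≤ T) : volume.real (box k T) = (2 * T) ^ k := by
  rw [measureReal_def, Real.volume_Icc_pi_toReal (fun _ => by linarith)]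
  simp [two_mul]

theorem integrableOn_box (f : APB k) (T : ℝ) : IntegrableOn f (box k T) :=
  f.continuous.integrableOn_Icc

variable (k) in
/-- The average of a bounded continuous function over the cube `[-T, T]^k`. -/
def boxAvg (T : ℝ) : APB k →L[ℂ] ℂ :=
  LinearMap.mkContinuous
    { toFun := fun f => (((2 * T) ^ k : ℝ) : ℂ)⁻¹ * ∫ x in box k T, f x
      map_add' := fun f g => by
        simp only [BoundedContinuousFunction.coe_add, Pi.add_apply]
        rw [integral_add (integrableOn_box f T) (integrableOn_box g T), mul_add]
      map_smul' := fun c f => by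
        simp only [BoundedContinuousFunction.coe_smul, smul_eq_mul, RingHom.id_apply]
        rw [integral_const_mul]
        ring }
    (|(2 * T) ^ k|⁻¹ * volume.real (box k T)) fun f => by
      change ‖(((2 * T) ^ k : ℝ) : ℂ)⁻¹ * ∫ x in box k T, f x‖ ≤ _
      rw [norm_mul, norm_inv, Complex.norm_real, Real.norm_eq_abs, mul_assoc]
      gcongr
      rw [mul_comm]
      exact norm_setIntegral_le_of_norm_le_const (isCompact_Icc.measure_lt_top)
        fun x _ => f.norm_coe_le_norm x

theorem boxAvg_apply (T : ℝ) (f : APB k) :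
    boxAvg k T f = (((2 * T) ^ k : ℝ) : ℂ)⁻¹ * ∫ x in box k T, f x := rfl

theorem norm_boxAvg_le {T : ℝ} (hT : 0 < T) : ‖boxAvg k T‖ ≤ 1 := by
  refine (LinearMap.mkContinuous_norm_le _ (by positivity) _).trans ?_
  rw [measureReal_box hT.le, abs_of_nonneg (by positivity), inv_mul_cancel₀ (by positivity)]

theorem eventually_norm_boxAvg_le : ∀ᶠ T in atTop, ‖boxAvg k T‖ ≤ 1 :=
  (eventually_gt_atTop 0).mono fun _ => norm_boxAvg_le

theorem tendsto_average_exp (a : ℝ) :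
    Tendsto (fun T : ℝ => (((2 * T : ℝ) : ℂ))⁻¹ *
      ∫ t in Set.Icc (-T) T, Complex.exp (Complex.I * ((a * t : ℝ) : ℂ))) atTop
      (nhds (if a = 0 then 1 else 0)) := by
  split_ifs with h
  · subst h
    refine tendsto_const_nhds.congr' ?_
    filter_upwards [eventually_gt_atTop 0] with T hT
    simp only [zero_mul, Complex.ofReal_zero, mul_zero, Complex.exp_zero, integral_const,
      measureReal_restrict_apply_univ, Real.volume_real_Icc]
    rw [max_eq_left (by linarith), Complex.real_smul, mul_one, sub_neg_eq_add, ← two_mul,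
      inv_mul_cancel₀]
    exact_mod_cast (by positivity : (2 * T) ≠ 0)
  · have hbound : ∀ᶠ T : ℝ in atTop, ‖(((2 * T : ℝ) : ℂ))⁻¹ *
        ∫ t in Set.Icc (-T) T, Complex.exp (Complex.I * ((a * t : ℝ) : ℂ))‖ ≤ |a|⁻¹ * T⁻¹ := by
      filter_upwards [eventually_gt_atTop 0] with T hT
      have hc : Complex.I * (a : ℂ) ≠ 0 := mul_ne_zero Complex.I_ne_zero (by exact_mod_cast h)
      have hi : ∫ t in Set.Icc (-T) T, Complex.exp (Complex.I * ((a * t : ℝ) : ℂ)) =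
          (Complex.exp (Complex.I * a * T) - Complex.exp (Complex.I * a * (-T : ℝ))) /
            (Complex.I * a) := by
        rw [integral_Icc_eq_integral_Ioc, ← intervalIntegral.integral_of_le (by linarith),
          ← integral_exp_mul_complex hc]
        congr 1
        ext t
        push_cast
        ring_nf
      have hn (t : ℝ) : ‖Complex.exp (Complex.I * a * t)‖ = 1 := by
        rw [← Complex.norm_exp_ofReal_mul_I (a * t)]
        congr 2
        push_cast
        ring
      rw [hi, norm_mul, norm_div, norm_inv, Complex.norm_real, norm_mul Complex.I, Complex.norm_I,
        Complex.norm_real, Real.norm_eq_abs, Real.norm_eq_abs, one_mul, abs_of_pos (by positivity)]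
      have h₂ : ‖Complex.exp (Complex.I * a * T) - Complex.exp (Complex.I * a * (-T : ℝ))‖ ≤ 2 := by
        refine (norm_sub_le _ _).trans ?_
        rw [hn, hn]
        norm_num
      have ha : 0 < |a| := abs_pos.2 h
      calc (2 * T)⁻¹ * (‖Complex.exp (Complex.I * a * T) - Complex.exp (Complex.I * a * (-T : ℝ))‖
            / |a|) ≤ (2 * T)⁻¹ * (2 / |a|) := by gcongr
        _ = |a|⁻¹ * T⁻¹ := by field_simp
    refine squeeze_zero_norm' hbound ?_
    simpa using tendsto_inv_atTop_zero.const_mul |a|⁻¹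

theorem boxAvg_apExp (T : ℝ) (lam : Fin k → ℝ) :
    boxAvg k T (apExp k lam) = ∏ j, ((((2 * T : ℝ) : ℂ))⁻¹ *
      ∫ t in Set.Icc (-T) T, Complex.exp (Complex.I * ((lam j * t : ℝ) : ℂ))) := by
  rw [boxAvg_apply, Finset.prod_mul_distrib, Finset.prod_const, Finset.card_univ, Fintype.card_fin]
  congr 1
  · push_cast
    rw [inv_pow]
  · have hbox : box k T = Set.pi Set.univ fun _ : Fin k => Set.Icc (-T) T :=
      Set.pi_univ_Icc _ _ |>.symm
    rw [hbox, volume_pi, Measure.restrict_pi_pi,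
      ← integral_fintype_prod_eq_prod
        (fun j (t : ℝ) => Complex.exp (Complex.I * ((lam j * t : ℝ) : ℂ)))]
    congr 1
    ext x
    rw [apExp_apply, ← Complex.exp_sum]
    push_cast
    rw [Finset.mul_sum]

theorem tendsto_boxAvg_apExp (lam : Fin k → ℝ) :
    Tendsto (fun T => boxAvg k T (apExp k lam)) atTop (nhds (if lam = 0 then 1 else 0)) := by
  simp only [boxAvg_apExp]
  have := tendsto_finsetProd Finset.univ fun j (_ : j ∈ Finset.univ) => tendsto_average_exp (lam j)
  convert this using 2
  simp [Finset.prod_ite_zero, funext_iff]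

theorem exists_tendsto_boxAvg {f : APB k} (hf : f ∈ APalg k) :
    ∃ a, Tendsto (fun T => boxAvg k T f) atTop (nhds a) := by
  let V : Submodule ℂ (APB k) :=
    { carrier := {f | ∃ a, Tendsto (fun T => boxAvg k T f) atTop (nhds a)}
      add_mem' := by
        rintro f g ⟨a, ha⟩ ⟨b, hb⟩
        exact ⟨a + b, by simpa using ha.add hb⟩
      zero_mem' := ⟨0, by simp⟩
      smul_mem' := by
        rintro c f ⟨a, ha⟩
        exact ⟨c * a, by simpa using ha.const_mul c⟩ }
  exact mem_of_mem_APalg V (isClosed_setOf_exists_tendsto eventually_norm_boxAvg_le)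
    (fun lam => ⟨_, tendsto_boxAvg_apExp lam⟩) hf

theorem bohrCoeff_eq_limUnder (f : APB k) (lam : Fin k → ℝ) :
    bohrCoeff k f lam = limUnder atTop fun T => boxAvg k T (apExp k (-lam) * f) := by
  unfold bohrCoeff
  congr 1
  ext T
  rw [boxAvg_apply]
  congr 3
  ext x
  simp [apExp_apply]

theorem bohrCoeff_eq_of_tendsto {f : APB k} {lam : Fin k → ℝ} {a : ℂ}
    (h : Tendsto (fun T => boxAvg k T (apExp k (-lam) * f)) atTop (nhds a)) :
    bohrCoeff k f lam = a := by
  rw [bohrCoeff_eq_limUnder]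
  exact h.limUnder_eq

theorem tendsto_bohrCoeff {f : APB k} (hf : f ∈ APalg k) (lam : Fin k → ℝ) :
    Tendsto (fun T => boxAvg k T (apExp k (-lam) * f)) atTop (nhds (bohrCoeff k f lam)) := by
  rw [bohrCoeff_eq_limUnder]
  exact tendsto_nhds_limUnder
    (exists_tendsto_boxAvg ((APalg k).mul_mem (apExp_mem_APalg _) hf))

end Mean

section Uniqueness

variable {k : ℕ}

theorem norm_apExp_sub_apply (lam x y : Fin k → ℝ) :
    ‖apExp k lam (x + -y) - 1‖ = ‖apExp k lam x - apExp k lam y‖ := by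
  have h : apExp k lam x = apExp k lam (x + -y) * apExp k lam y := by
    rw [← apExp_apply_add, neg_add_cancel_right]
  rw [h, ← sub_one_mul, norm_mul, norm_apExp_apply, mul_one]

theorem exists_le_measureReal_almostPeriods (F : Finset (Fin k → ℝ)) {η : ℝ} (hη : 0 < η) :
    ∃ n : ℕ, 0 < n ∧ ∀ T : ℝ, 0 < T → (2 * T) ^ k ≤
      n * volume.real ({τ | ∀ lam ∈ F, ‖apExp k lam τ - 1‖ < η} ∩ box k (2 * T)) := by
  let Ψ : (Fin k → ℝ) → (F → ℂ) := fun x lam => apExp k lam x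
  obtain ⟨t, ht, hcover⟩ := Metric.totallyBounded_iff.1
    (isCompact_closedBall (0 : F → ℂ) 1).totallyBounded (η / 2) (half_pos hη)
  lift t to Finset (F → ℂ) using ht
  refine ⟨t.card + 1, Nat.succ_pos _, fun T hT => ?_⟩
  set Q := {τ | ∀ lam ∈ F, ‖apExp k lam τ - 1‖ < η} ∩ box k (2 * T) with hQ
  have hQfin : volume Q ≠ ⊤ :=
    measure_ne_top_of_subset Set.inter_subset_right isCompact_Icc.measure_lt_top.ne
  have hsub : box k T ⊆ ⋃ c ∈ t, {x ∈ box k T | dist (Ψ x) c < η / 2} := by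
    intro x hx
    have hΨ : Ψ x ∈ Metric.closedBall (0 : F → ℂ) 1 := by
      rw [mem_closedBall_zero_iff, pi_norm_le_iff_of_nonneg zero_le_one]
      exact fun lam => (norm_apExp_apply _ _).le
    obtain ⟨c, hc, hxc⟩ := Set.mem_iUnion₂.1 (hcover hΨ)
    exact Set.mem_iUnion₂.2 ⟨c, hc, hx, hxc⟩
  have hpiece (c : F → ℂ) :
      volume.real {x ∈ box k T | dist (Ψ x) c < η / 2} ≤ volume.real Q := by
    rcases Set.eq_empty_or_nonempty {x ∈ box k T | dist (Ψ x) c < η / 2} with h | ⟨y, hy, hyc⟩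
    · rw [h, measureReal_empty]
      exact measureReal_nonneg
    · have hQ' : volume.real ((fun x => x + -y) ⁻¹' Q) = volume.real Q := by
        rw [measureReal_def, measure_preimage_add_right, measureReal_def]
      rw [← hQ']
      refine measureReal_mono ?_ (by rwa [measure_preimage_add_right])
      rintro x ⟨hx, hxc⟩
      refine ⟨fun lam hlam => ?_, fun j => ?_, fun j => ?_⟩
      · rw [norm_apExp_sub_apply, ← dist_eq_norm]
        calc dist (apExp k lam x) (apExp k lam y) ≤ dist (Ψ x) (Ψ y) :=
              dist_le_pi_dist (Ψ x) (Ψ y) ⟨lam, hlam⟩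
          _ ≤ dist (Ψ x) c + dist (Ψ y) c := dist_triangle_right _ _ _
          _ < η := by linarith
      · have h₁ := hx.1 j
        have h₂ := hy.2 j
        simp only [Pi.add_apply, Pi.neg_apply] at *
        linarith
      · have h₁ := hx.2 j
        have h₂ := hy.1 j
        simp only [Pi.add_apply, Pi.neg_apply] at *
        linarith
  rw [← measureReal_box hT.le]
  calc volume.real (box k T)
      ≤ volume.real (⋃ c ∈ t, {x ∈ box k T | dist (Ψ x) c < η / 2}) :=
        measureReal_mono hsub (measure_ne_top_of_subset
          (Set.iUnion₂_subset fun c _ => Set.sep_subset _ _) isCompact_Icc.measure_lt_top.ne)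
    _ ≤ ∑ c ∈ t, volume.real {x ∈ box k T | dist (Ψ x) c < η / 2} :=
        measureReal_biUnion_finset_le _ _
    _ ≤ ∑ _c ∈ t, volume.real Q := Finset.sum_le_sum fun c _ => hpiece c
    _ ≤ (t.card + 1 : ℕ) * volume.real Q := by
        rw [Finset.sum_const, nsmul_eq_mul]
        have := measureReal_nonneg (μ := volume) (s := Q)
        push_cast
        nlinarith

theorem exists_finset_almostPeriods {g : APB k} (hg : g ∈ APalg k) {ε : ℝ} (hε : 0 < ε) :
    ∃ (F : Finset (Fin k → ℝ)) (η : ℝ), 0 < η ∧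
      ∀ τ, (∀ lam ∈ F, ‖apExp k lam τ - 1‖ < η) → ∀ x, ‖g (x + τ) - g x‖ < ε := by
  obtain ⟨p, hp, hgp⟩ := Metric.mem_closure_iff.1 hg (ε / 4) (by positivity)
  obtain ⟨c, rfl⟩ := Finsupp.mem_span_range_iff_exists_finsupp.1 (adjoin_apExp_le_span hp)
  set p : APB k := c.sum fun i a => a • apExp k i with hpdef
  have hK : 0 ≤ ∑ lam ∈ c.support, ‖c lam‖ := Finset.sum_nonneg fun _ _ => norm_nonneg _
  refine ⟨c.support, ε / (4 * (∑ lam ∈ c.support, ‖c lam‖ + 1)), by positivity,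
    fun τ hτ x => ?_⟩
  have hpx (x : Fin k → ℝ) : p x = ∑ lam ∈ c.support, c lam * apExp k lam x := by
    simp [hpdef, Finsupp.sum]
  have h₁ : ‖p (x + τ) - p x‖ ≤ ε / 4 := by
    rw [hpx, hpx, ← Finset.sum_sub_distrib]
    calc ‖∑ lam ∈ c.support, (c lam * apExp k lam (x + τ) - c lam * apExp k lam x)‖
        ≤ ∑ lam ∈ c.support, ‖c lam‖ * (ε / (4 * (∑ lam ∈ c.support, ‖c lam‖ + 1))) := by
          refine norm_sum_le_of_le _ fun lam hlam => ?_
          rw [apExp_apply_add, ← mul_sub, ← mul_sub_one, norm_mul, norm_mul, norm_apExp_apply,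
            one_mul]
          exact mul_le_mul_of_nonneg_left (hτ lam hlam).le (norm_nonneg _)
      _ ≤ ε / 4 := by
          rw [← Finset.sum_mul]
          set K := ∑ lam ∈ c.support, ‖c lam‖
          rw [mul_div_assoc', div_le_div_iff₀ (by positivity) (by positivity)]
          nlinarith
  have h₂ (y : Fin k → ℝ) : ‖g y - p y‖ < ε / 4 := by
    rw [← dist_eq_norm]
    exact (BoundedContinuousFunction.dist_coe_le_dist y).trans_lt hgp
  calc ‖g (x + τ) - g x‖
      = ‖(g (x + τ) - p (x + τ)) + (p (x + τ) - p x) - (g x - p x)‖ := by congr 1; ring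
    _ ≤ ‖g (x + τ) - p (x + τ)‖ + ‖p (x + τ) - p x‖ + ‖g x - p x‖ :=
        (norm_sub_le _ _).trans (by gcongr; exact norm_add_le _ _)
    _ < ε := by linarith [h₂ x, h₂ (x + τ)]

theorem boxAvg_star_mul_self (g : APB k) (T : ℝ) :
    boxAvg k T (star g * g) = (((2 * T) ^ k)⁻¹ * ∫ x in box k T, ‖g x‖ ^ 2 : ℝ) := by
  rw [boxAvg_apply, Complex.ofReal_mul, Complex.ofReal_inv, ← integral_complex_ofReal]
  congr 2
  ext x
  simp [← Complex.normSq_eq_conj_mul_self, Complex.normSq_eq_norm_sq]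

theorem eq_zero_of_tendsto_boxAvg {g : APB k} (hg : g ∈ APalg k)
    (h : Tendsto (fun T => boxAvg k T (star g * g)) atTop (nhds 0)) : g = 0 := by
  by_contra hne
  obtain ⟨x₀, hx₀⟩ : ∃ x, g x ≠ 0 := by
    by_contra! h0
    exact hne (BoundedContinuousFunction.ext h0)
  set δ := ‖g x₀‖ with hδ
  have hδ0 : 0 < δ := norm_pos_iff.2 hx₀
  obtain ⟨F, η, hη, hF⟩ := exists_finset_almostPeriods hg (half_pos hδ0)
  obtain ⟨n, hn, hvol⟩ := exists_le_measureReal_almostPeriods F hη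
  have hn' : (0 : ℝ) < n := by exact_mod_cast hn
  have hlower : ∀ᶠ T : ℝ in atTop,
      (δ / 2) ^ 2 / (n * 3 ^ k) ≤ ‖boxAvg k (3 * T) (star g * g)‖ := by
    filter_upwards [eventually_gt_atTop 0, eventually_ge_atTop ‖x₀‖] with T hT hTx
    set Q := {τ | ∀ lam ∈ F, ‖apExp k lam τ - 1‖ < η} ∩ box k (2 * T) with hQ
    have hint : Integrable (fun x => ‖g x‖ ^ 2) (volume.restrict (box k (3 * T))) :=
      (by fun_prop : Continuous fun x => ‖g x‖ ^ 2).integrableOn_Icc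
    have hmarkov := mul_meas_ge_le_integral_of_nonneg
      (Eventually.of_forall fun x => sq_nonneg ‖g x‖) hint ((δ / 2) ^ 2)
    have hQle : volume.real Q ≤
        (volume.restrict (box k (3 * T))).real {x | (δ / 2) ^ 2 ≤ ‖g x‖ ^ 2} := by
      have hQ' : volume.real ((fun x => x + -x₀) ⁻¹' Q) = volume.real Q := by
        rw [measureReal_def, measure_preimage_add_right, measureReal_def]
      rw [← hQ', measureReal_restrict_apply' measurableSet_Icc]
      refine measureReal_mono ?_ (measure_ne_top_of_subset Set.inter_subset_right
        isCompact_Icc.measure_lt_top.ne)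
      rintro x ⟨hxF, hxb⟩
      have hxj (j : Fin k) : |x₀ j| ≤ T := (norm_le_pi_norm x₀ j).trans hTx
      refine ⟨?_, fun j => ?_, fun j => ?_⟩
      · have := hF _ hxF x₀
        rw [add_neg_cancel_comm_assoc] at this
        have h₂ := norm_sub_norm_le (g x₀) (g x)
        rw [norm_sub_rev] at h₂
        have h₃ : δ / 2 ≤ ‖g x‖ := by linarith
        exact pow_le_pow_left₀ (by positivity) h₃ 2
      · have := hxb.1 j
        simp only [Pi.add_apply, Pi.neg_apply] at *
        linarith [neg_abs_le (x₀ j), hxj j]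
      · have := hxb.2 j
        simp only [Pi.add_apply, Pi.neg_apply] at *
        linarith [le_abs_self (x₀ j), hxj j]
    have hle : (δ / 2) ^ 2 * ((2 * T) ^ k / n) ≤ ∫ x in box k (3 * T), ‖g x‖ ^ 2 := by
      refine le_trans ?_ hmarkov
      gcongr
      refine le_trans ?_ hQle
      rw [div_le_iff₀ hn', mul_comm _ (n : ℝ)]
      exact hvol T hT
    rw [boxAvg_star_mul_self, Complex.norm_real, Real.norm_eq_abs]
    refine le_trans ?_ (le_abs_self _)
    have hT3 : (2 * (3 * T)) ^ k = 3 ^ k * (2 * T) ^ k := by rw [← mul_pow]; ring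
    rw [hT3]
    calc (δ / 2) ^ 2 / (n * 3 ^ k)
        = (3 ^ k * (2 * T) ^ k)⁻¹ * ((δ / 2) ^ 2 * ((2 * T) ^ k / n)) := by field_simp
      _ ≤ _ := by gcongr
  have hlim : Tendsto (fun T : ℝ => ‖boxAvg k (3 * T) (star g * g)‖) atTop (nhds 0) := by
    have := (h.comp (tendsto_id.const_mul_atTop (by norm_num : (0 : ℝ) < 3))).norm
    simpa using this
  have := ge_of_tendsto hlim hlower
  have hpos : 0 < (δ / 2) ^ 2 / (n * 3 ^ k) := by positivity
  linarith

theorem eq_zero_of_bohrCoeff_eq_zero {g : APB k} (hg : g ∈ APalg k)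
    (h : ∀ lam, bohrCoeff k g lam = 0) : g = 0 := by
  let V : Submodule ℂ (APB k) :=
    { carrier := {f | Tendsto (fun T => boxAvg k T (star f * g)) atTop (nhds 0)}
      add_mem' := by
        intro a b ha hb
        simpa [add_mul] using Tendsto.add ha hb
      zero_mem' := by simp
      smul_mem' := by
        intro c f hf
        simpa using Tendsto.const_mul (star c) hf }
  have hclosed : IsClosed (V : Set (APB k)) := by
    have h₁ : Continuous fun f : APB k => star f * g := by fun_prop
    exact (isClosed_setOf_tendsto_zero eventually_norm_boxAvg_le).preimage h₁
  refine eq_zero_of_tendsto_boxAvg hg (mem_of_mem_APalg V hclosed (fun lam => ?_) hg)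
  have := tendsto_bohrCoeff hg lam
  rw [h lam] at this
  change Tendsto (fun T => boxAvg k T (star (apExp k lam) * g)) atTop (nhds 0)
  rwa [star_apExp]

end Uniqueness

section Series

variable {k : ℕ} {M : Type*} [AddCommMonoid M]

/-- The absolutely convergent exponential series with frequencies `φ μ`, `μ ∈ M`. -/
def expSeries (φ : M →+ (Fin k → ℝ)) : EllOne M →ₐ[ℂ] APB k :=
  EllOne.liftHom (fun μ => apExp k (φ μ)) (fun _ => norm_apExp_le _)
    (by rw [map_zero, apExp_zero]) fun μ ν => by rw [map_add, apExp_add]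

theorem hasSum_expSeries (φ : M →+ (Fin k → ℝ)) (c : EllOne M) :
    HasSum (fun μ => c μ • apExp k (φ μ)) (expSeries φ c) :=
  EllOne.hasSum_lift _ _ c

theorem expSeries_mem_APalg (φ : M →+ (Fin k → ℝ)) (c : EllOne M) : expSeries φ c ∈ APalg k :=
  isClosed_APalg.mem_of_tendsto (hasSum_expSeries φ c) <| Eventually.of_forall fun _ =>
    (APalg k).sum_mem fun _ _ => (APalg k).smul_mem (apExp_mem_APalg _) _

open Classical in
theorem bohrCoeff_expSeries (φ : M →+ (Fin k → ℝ)) (c : EllOne M) (lam : Fin k → ℝ) :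
    bohrCoeff k (expSeries φ c) lam = ∑' μ, if φ μ = lam then c μ else 0 := by
  refine bohrCoeff_eq_of_tendsto ?_
  have hsum (T : ℝ) : boxAvg k T (apExp k (-lam) * expSeries φ c) =
      ∑' μ, c μ * boxAvg k T (apExp k (φ μ - lam)) := by
    have := (boxAvg k T).hasSum ((hasSum_expSeries φ c).mul_left (apExp k (-lam)))
    rw [← this.tsum_eq]
    refine tsum_congr fun μ => ?_
    rw [mul_smul_comm, map_smul, smul_eq_mul, ← apExp_add, neg_add_eq_sub]
  simp only [hsum]
  refine tendsto_tsum_of_dominated_convergence (EllOne.summable_norm c) (fun μ => ?_) ?_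
  · have := (tendsto_boxAvg_apExp (φ μ - lam)).const_mul (c μ)
    simpa [sub_eq_zero] using this
  · filter_upwards [eventually_norm_boxAvg_le] with T hT μ
    rw [norm_mul]
    refine mul_le_of_le_one_right (norm_nonneg _) ?_
    exact ((boxAvg k T).le_of_opNorm_le hT _).trans (by simpa using norm_apExp_le _)

theorem bohrCoeff_expSeries_apply {φ : M →+ (Fin k → ℝ)} (hφ : Function.Injective φ)
    (c : EllOne M) (μ : M) : bohrCoeff k (expSeries φ c) (φ μ) = c μ := by
  classical
  rw [bohrCoeff_expSeries, tsum_eq_single μ fun ν hν => if_neg fun h => hν (hφ h), if_pos rfl]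

theorem bohrCoeff_expSeries_of_notMem {φ : M →+ (Fin k → ℝ)} (c : EllOne M)
    {lam : Fin k → ℝ} (hlam : lam ∉ Set.range φ) : bohrCoeff k (expSeries φ c) lam = 0 := by
  classical
  rw [bohrCoeff_expSeries]
  exact (tsum_congr fun μ => if_neg fun h => hlam ⟨μ, h⟩).trans tsum_zero

theorem bohrCoeff_sub {f g : APB k} (hf : f ∈ APalg k) (hg : g ∈ APalg k) (lam : Fin k → ℝ) :
    bohrCoeff k (f - g : APB k) lam = bohrCoeff k f lam - bohrCoeff k g lam := by
  refine bohrCoeff_eq_of_tendsto ?_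
  simpa [mul_sub] using (tendsto_bohrCoeff hf lam).sub (tendsto_bohrCoeff hg lam)

theorem APWmem_iff_exists_expSeries {φ : M →+ (Fin k → ℝ)} (hφ : Function.Injective φ)
    (f : APB k) : APWmem k (Set.range φ) f ↔ ∃ c, expSeries φ c = f := by
  constructor
  · rintro ⟨⟨hf, hspec⟩, hsum⟩
    let c : EllOne M := EllOne.mk (fun μ => bohrCoeff k f (φ μ)) (hsum.comp_injective hφ)
    refine ⟨c, ?_⟩
    have hc := expSeries_mem_APalg φ c
    refine (sub_eq_zero.1 (eq_zero_of_bohrCoeff_eq_zero ((APalg k).sub_mem hf hc)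
      fun lam => ?_)).symm
    rw [bohrCoeff_sub hf hc, sub_eq_zero]
    by_cases hlam : lam ∈ Set.range φ
    · obtain ⟨μ, rfl⟩ := hlam
      rw [bohrCoeff_expSeries_apply hφ]
      rfl
    · rw [bohrCoeff_expSeries_of_notMem c hlam]
      by_contra hne
      exact hlam (hspec hne)
  · rintro ⟨c, rfl⟩
    have hzero : ∀ lam ∉ Set.range φ, ‖bohrCoeff k (expSeries φ c) lam‖ = 0 := fun lam hlam => by
      rw [bohrCoeff_expSeries_of_notMem c hlam, norm_zero]
    refine ⟨⟨expSeries_mem_APalg φ c, fun lam hlam => ?_⟩, ?_⟩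
    · by_contra hne
      exact hlam (bohrCoeff_expSeries_of_notMem c hne)
    · refine (hφ.summable_iff hzero).1 ?_
      simpa [Function.comp_def, bohrCoeff_expSeries_apply hφ] using EllOne.summable_norm c

end Series

section ColEquiv

theorem map_mul_map_eq_one {R R' : Type*} [CommRing R] [CommRing R'] {p n : Type*} [Fintype n]
    [DecidableEq p] {A : Matrix p n R} {N : Matrix n p R} (hN : A * N = 1)
    (f : R →+* R') : A.map f * N.map f = 1 := by
  rw [← Matrix.map_mul, hN, Matrix.map_one f (map_zero f) (map_one f)]

variable {R R' : Type*} [CommRing R] [CommRing R'] {p n : Type*} [Fintype n] [DecidableEq n]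

/-- Two matrices are column equivalent if they differ by an invertible right factor. -/
def ColEquiv (A B : Matrix p n R) : Prop := ∃ U : Matrix n n R, IsUnit U.det ∧ B = A * U

theorem ColEquiv.symm {A B : Matrix p n R} (h : ColEquiv A B) : ColEquiv B A := by
  obtain ⟨U, hU, rfl⟩ := h
  exact ⟨U⁻¹, Matrix.isUnit_nonsing_inv_det U hU, (Matrix.mul_nonsing_inv_cancel_right U A hU).symm⟩

theorem ColEquiv.trans {A B C : Matrix p n R} (h : ColEquiv A B) (h' : ColEquiv B C) :
    ColEquiv A C := by
  obtain ⟨U, hU, rfl⟩ := h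
  obtain ⟨V, hV, rfl⟩ := h'
  exact ⟨U * V, by rw [Matrix.det_mul]; exact hU.mul hV, Matrix.mul_assoc _ _ _⟩

theorem ColEquiv.map {A B : Matrix p n R} (h : ColEquiv A B) (f : R →+* R') :
    ColEquiv (A.map f) (B.map f) := by
  obtain ⟨U, hU, rfl⟩ := h
  refine ⟨U.map f, ?_, Matrix.map_mul⟩
  have := hU.map f
  rwa [RingHom.map_det] at this

theorem map_fromCols_zero_one {m p : ℕ} (f : R →+* R') :
    (Matrix.fromCols (0 : Matrix (Fin p) (Fin m) R) (1 : Matrix (Fin p) (Fin p) R)).map f =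
      Matrix.fromCols 0 1 := by
  rw [Matrix.fromCols_map, Matrix.map_one f (map_zero f) (map_one f),
    Matrix.map_zero f (map_zero f)]

theorem colEquiv_of_isUnit_det [Fintype p] [DecidableEq p] {A B : Matrix p n R}
    {N : Matrix n p R} (hN : A * N = 1)
    (h : IsUnit (1 + N * (B - A)).det) : ColEquiv A B :=
  ⟨_, h, by rw [Matrix.mul_add, Matrix.mul_one, ← Matrix.mul_assoc, hN, Matrix.one_mul,
    add_sub_cancel]⟩

theorem colEquiv_fromCols_zero_one {K : Type*} [Field K] {m p : ℕ}
    {A : Matrix (Fin p) (Fin m ⊕ Fin p) K} {N : Matrix (Fin m ⊕ Fin p) (Fin p) K}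
    (hN : A * N = 1) : ColEquiv A (Matrix.fromCols 0 1) := by
  have hrange : LinearMap.range A.mulVecLin = ⊤ := by
    refine LinearMap.range_eq_top.2 fun y => ⟨N.mulVec y, ?_⟩
    rw [Matrix.mulVecLin_apply, Matrix.mulVec_mulVec, hN, Matrix.one_mulVec]
  have hker : Module.finrank K (LinearMap.ker A.mulVecLin) = m := by
    have := LinearMap.finrank_range_add_finrank_ker A.mulVecLin
    rw [hrange, finrank_top] at this
    simp at this
    omega
  let b := Module.finBasisOfFinrankEq K _ hker
  let Z : Matrix (Fin m ⊕ Fin p) (Fin m) K := Matrix.of fun i j => (b j : Fin m ⊕ Fin p → K) i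
  have hZ (x : Fin m → K) : Z.mulVec x = (∑ j, x j • b j : LinearMap.ker A.mulVecLin) := by
    ext i
    simp [Z, Matrix.mulVec, dotProduct, mul_comm]
  have hAZ : A * Z = 0 := by
    ext i j
    exact congrFun (LinearMap.mem_ker.1 (b j).2) i
  refine ⟨Matrix.fromCols Z N, ?_, ?_⟩
  · rw [← Matrix.isUnit_iff_isUnit_det, ← Matrix.mulVec_injective_iff_isUnit]
    refine (injective_iff_map_eq_zero (Matrix.fromCols Z N).mulVecLin).2 fun x hx => ?_
    rw [Matrix.mulVecLin_apply, Matrix.fromCols_mulVec] at hx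
    have h₂ : x ∘ Sum.inr = 0 := by
      have := congrArg A.mulVec hx
      rwa [Matrix.mulVec_add, Matrix.mulVec_mulVec, Matrix.mulVec_mulVec, hAZ, hN,
        Matrix.zero_mulVec, Matrix.one_mulVec, zero_add, Matrix.mulVec_zero] at this
    rw [h₂, Matrix.mulVec_zero, add_zero, hZ] at hx
    have h₁ : x ∘ Sum.inl = 0 := by
      have h0 : ∑ j, (x ∘ Sum.inl) j • b j = 0 := Subtype.ext hx
      ext j
      exact Fintype.linearIndependent_iff.1 b.linearIndependent _ h0 j
    ext (j | j)
    exacts [congrFun h₁ j, congrFun h₂ j]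
  · rw [Matrix.mul_fromCols, hAZ, hN]

theorem colEquiv_of_path [Fintype p] [DecidableEq p] {R : Type*} [NormedCommRing R]
    [CompleteSpace R] {A : unitInterval → Matrix p n R} (hA : Continuous A)
    (hN : ∀ s, ∃ N : Matrix n p R, A s * N = 1)
    (s t : unitInterval) : ColEquiv (A s) (A t) := by
  have : Std.Symm fun s t => ColEquiv (A s) (A t) := ⟨fun _ _ => ColEquiv.symm⟩
  refine PreconnectedSpace.induction₂ (fun s t => ColEquiv (A s) (A t)) (fun s => ?_)
    ⟨fun _ _ _ => ColEquiv.trans⟩ s t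
  obtain ⟨N, hN⟩ := hN s
  have hc : Continuous fun t => (1 + N * (A t - A s)).det := by fun_prop
  have hs : (1 + N * (A s - A s)).det ∈ {x : R | IsUnit x} := by simp
  filter_upwards [hc.continuousAt.eventually_mem (Units.isOpen.mem_nhds hs)] with t ht
  exact colEquiv_of_isUnit_det hN ht

end ColEquiv

namespace EllOne

section Scaling

variable {M : Type*} [AddCommMonoid M] {w : M →+ ℝ}

theorem norm_rpow_weight_le (hw : ∀ μ, 0 ≤ w μ) (s : unitInterval) (μ : M) :
    ‖(((s : ℝ) ^ w μ : ℝ) : ℂ)‖ ≤ 1 := by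
  rw [Complex.norm_real, Real.norm_of_nonneg (Real.rpow_nonneg s.2.1 _)]
  exact Real.rpow_le_one s.2.1 s.2.2 (hw μ)

theorem rpow_weight_add (hw : ∀ μ, 0 ≤ w μ) (s : unitInterval) (μ ν : M) :
    (((s : ℝ) ^ w (μ + ν) : ℝ) : ℂ) = ((s : ℝ) ^ w μ : ℝ) * ((s : ℝ) ^ w ν : ℝ) := by
  rw [map_add, Real.rpow_add_of_nonneg s.2.1 (hw μ) (hw ν), Complex.ofReal_mul]

variable (hw : ∀ μ, 0 ≤ w μ)

/-- The endomorphism of `ℓ¹(M)` scaling the basis element at `μ` by `s ^ w μ`. -/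
def scale (s : unitInterval) : EllOne M →ₐ[ℂ] EllOne M :=
  liftHom (fun μ => (((s : ℝ) ^ w μ : ℝ) : ℂ) • delta μ)
    (fun μ => by rw [norm_smul, norm_delta, mul_one]; exact norm_rpow_weight_le hw s μ)
    (by rw [map_zero, Real.rpow_zero, Complex.ofReal_one, one_smul]; rfl)
    fun μ ν => by rw [rpow_weight_add hw, smul_mul_smul_comm, delta_mul_delta]

/-- The character of `ℓ¹(M)` sending the basis element at `μ` to `0 ^ w μ`. -/
def augment : EllOne M →ₐ[ℂ] ℂ :=
  liftHom (fun μ => (((0 : unitInterval) : ℝ) ^ w μ : ℝ)) (norm_rpow_weight_le hw 0) (by simp)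
    (rpow_weight_add hw 0)

theorem scale_one (c : EllOne M) : scale hw 1 c = c :=
  lift_eq_of_delta (T := ContinuousLinearMap.id ℂ (EllOne M)) (fun μ => by simp) c

theorem scale_zero (hw' : ∀ μ, w μ = 0 → μ = 0) (c : EllOne M) :
    scale hw 0 c = algebraMap ℂ (EllOne M) (augment hw c) := by
  rw [Algebra.algebraMap_eq_smul_one]
  refine lift_eq_of_delta (T := ContinuousLinearMap.smulRight
    (lift (fun μ => (((0 : unitInterval) : ℝ) ^ w μ : ℝ)) (norm_rpow_weight_le hw 0) :
      EllOne M →L[ℂ] ℂ) (1 : EllOne M)) (fun μ => ?_) c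
  rw [ContinuousLinearMap.smulRight_apply, lift_delta]
  by_cases hμ : w μ = 0
  · rw [hw' μ hμ]
    rfl
  · simp [Real.zero_rpow hμ]

theorem continuous_scale (c : EllOne M) : Continuous fun s => scale hw s c := by
  refine continuous_tsum (fun μ => ?_) (summable_norm c) fun μ s => ?_
  · have : Continuous fun s : unitInterval => (s : ℝ) ^ w μ :=
      (Real.continuous_rpow_const (hw μ)).comp continuous_subtype_val
    fun_prop
  · rw [norm_smul, norm_smul, norm_delta, mul_one]
    exact mul_le_of_le_one_right (norm_nonneg _) (norm_rpow_weight_le hw s μ)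

theorem colEquiv_fromCols_of_weight (hw : ∀ μ, 0 ≤ w μ) (hw' : ∀ μ, w μ = 0 → μ = 0) {m p : ℕ}
    {A : Matrix (Fin p) (Fin m ⊕ Fin p) (EllOne M)} {N : Matrix (Fin m ⊕ Fin p) (Fin p) (EllOne M)}
    (hN : A * N = 1) : ColEquiv A (Matrix.fromCols 0 1) := by
  have hpath := colEquiv_of_path (A := fun s => A.map (scale hw s))
    (continuous_pi fun i => continuous_pi fun j => continuous_scale hw (A i j))
    (fun s => ⟨_, map_mul_map_eq_one hN (scale hw s : EllOne M →+* EllOne M)⟩) 1 0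
  have h1 : A.map (scale hw 1) = A := by
    ext i j : 2
    exact scale_one hw _
  have h0 : A.map (scale hw 0) = (A.map (augment hw)).map (algebraMap ℂ (EllOne M)) := by
    ext i j : 2
    exact scale_zero hw hw' _
  have hend := (colEquiv_fromCols_zero_one
    (map_mul_map_eq_one hN (augment hw : EllOne M →+* ℂ))).map (algebraMap ℂ (EllOne M))
  rw [map_fromCols_zero_one] at hend
  rw [h1, h0] at hpath
  exact hpath.trans hend

end Scaling

section Restriction

variable {M : Type*} [AddCommMonoid M] (Δ : AddSubmonoid M)

/-- Extension by zero, as a homomorphism of Banach algebras. -/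
def extend : EllOne Δ →ₐ[ℂ] EllOne M :=
  liftHom (fun μ => delta (μ : M)) (fun _ => (norm_delta _).le) rfl fun _ _ => by simp

open Classical in
/-- Restriction of the coefficients to a submonoid. -/
def restrict : EllOne M →L[ℂ] EllOne Δ :=
  lift (fun μ => if h : μ ∈ Δ then delta ⟨μ, h⟩ else 0) fun μ => by
    split_ifs
    · exact (norm_delta _).le
    · simp

theorem restrict_delta {μ : M} (h : μ ∈ Δ) : restrict Δ (delta μ) = delta ⟨μ, h⟩ := by
  rw [restrict, lift_delta, dif_pos h]

theorem extend_delta (μ : Δ) : extend Δ (delta μ) = delta (μ : M) := lift_delta _ _ _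

theorem restrict_extend (c : EllOne Δ) : restrict Δ (extend Δ c) = c := by
  have : (restrict Δ).comp (lift (fun μ : Δ => delta (μ : M)) fun _ => (norm_delta _).le) =
      ContinuousLinearMap.id ℂ (EllOne Δ) :=
    clm_ext fun μ => by
      rw [ContinuousLinearMap.comp_apply, lift_delta, restrict_delta Δ μ.2,
        ContinuousLinearMap.id_apply]
  exact congr($this c)

theorem norm_le_norm_extend (c : EllOne Δ) : ‖c‖ ≤ ‖extend Δ c‖ := by
  conv_lhs => rw [← restrict_extend Δ c]
  exact norm_lift_apply_le _ _ _

end Restriction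

variable {M : Type*}

/-- The truncation of an element of `ℓ¹(M)` to a finite set of indices. -/
def truncate (s : Finset M) (c : EllOne M) : EllOne M := ∑ μ ∈ s, c μ • delta μ

theorem tendsto_truncate (c : EllOne M) : Tendsto (fun s => truncate s c) atTop (nhds c) :=
  hasSum_delta c

variable [AddCommMonoid M]

theorem extend_restrict_truncate {Δ : AddSubmonoid M} {s : Finset M} (hs : ∀ μ ∈ s, μ ∈ Δ)
    (c : EllOne M) : extend Δ (restrict Δ (truncate s c)) = truncate s c := by
  simp only [truncate, map_sum, map_smul]
  refine Finset.sum_congr rfl fun μ hμ => ?_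
  rw [restrict_delta Δ (hs μ hμ), extend_delta]

theorem colEquiv_fromCols (hM : ∀ F : Finset M, ∃ w : M →+ ℝ, ∀ μ ∈ F, μ ≠ 0 → 0 < w μ) {m p : ℕ}
    {A : Matrix (Fin p) (Fin m ⊕ Fin p) (EllOne M)} {N : Matrix (Fin m ⊕ Fin p) (Fin p) (EllOne M)}
    (hN : A * N = 1) : ColEquiv A (Matrix.fromCols 0 1) := by
  have hA : Tendsto (fun s => A.map (truncate s)) atTop (nhds A) :=
    tendsto_pi_nhds.2 fun i => tendsto_pi_nhds.2 fun j => tendsto_truncate (A i j)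
  have hN' : Tendsto (fun s => N.map (truncate s)) atTop (nhds N) :=
    tendsto_pi_nhds.2 fun i => tendsto_pi_nhds.2 fun j => tendsto_truncate (N i j)
  have h₁ : ∀ᶠ s in atTop, IsUnit (1 + N * (A.map (truncate s) - A)).det := by
    have hc : Continuous fun B => (1 + N * (B - A)).det := by fun_prop
    refine (hc.continuousAt.tendsto.comp hA).eventually_mem (Units.isOpen.mem_nhds ?_)
    simp
  have h₂ : ∀ᶠ s in atTop, ‖(A.map (truncate s) * N.map (truncate s)).det - 1‖ < 1 := by
    have hc : Continuous fun B : Matrix (Fin p) (Fin m ⊕ Fin p) (EllOne M) ×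
      Matrix (Fin m ⊕ Fin p) (Fin p) (EllOne M) => ‖(B.1 * B.2).det - 1‖ := by fun_prop
    refine ((hc.tendsto (A, N)).comp (hA.prodMk_nhds hN')).eventually_lt_const ?_
    simp [hN]
  obtain ⟨s, hs₁, hs₂⟩ := (h₁.and h₂).exists
  obtain ⟨w, hw⟩ := hM s
  let Δ : AddSubmonoid M :=
    { carrier := {μ | μ = 0 ∨ 0 < w μ}
      zero_mem' := Or.inl rfl
      add_mem' := by
        rintro μ ν (rfl | hμ) (rfl | hν)
        · simp
        · simpa using Or.inr hν
        · simpa using Or.inr hμ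
        · exact Or.inr (by rw [map_add]; positivity) }
  have hsΔ : ∀ μ ∈ s, μ ∈ Δ := fun μ hμ => or_iff_not_imp_left.2 (hw μ hμ)
  have hmap {q r : Type} (B : Matrix q r (EllOne M)) :
      ((B.map (truncate s)).map (restrict Δ)).map (extend Δ) = B.map (truncate s) := by
    ext i j : 2
    exact extend_restrict_truncate hsΔ _
  set A' := (A.map (truncate s)).map (restrict Δ) with hA'
  set N' := (N.map (truncate s)).map (restrict Δ) with hN'
  have hdet : IsUnit (A' * N').det := by
    have : ‖1 - (A' * N').det‖ < 1 := by
      rw [norm_sub_rev]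
      refine (norm_le_norm_extend Δ _).trans_lt ?_
      rwa [map_sub, map_one, AlgHom.map_det, AlgHom.mapMatrix_apply, Matrix.map_mul, hmap, hmap]
    simpa using isUnit_one_sub_of_norm_lt_one this
  have hw₀ : ∀ μ : Δ, 0 ≤ (w.comp Δ.subtype) μ := by
    rintro ⟨μ, rfl | hμ⟩
    · simp
    · exact hμ.le
  have hw₁ : ∀ μ : Δ, (w.comp Δ.subtype) μ = 0 → μ = 0 := by
    rintro ⟨μ, rfl | hμ⟩ h
    · rfl
    · exact absurd h hμ.ne'
  have hright : A' * (N' * (A' * N')⁻¹) = 1 := by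
    rw [← Matrix.mul_assoc, Matrix.mul_nonsing_inv _ hdet]
  have hext := (colEquiv_fromCols_of_weight hw₀ hw₁ hright).map (extend Δ : EllOne Δ →+* EllOne M)
  rw [map_fromCols_zero_one] at hext
  refine (colEquiv_of_isUnit_det hN hs₁).trans ?_
  rw [← hmap A]
  exact hext

end EllOne

theorem IsHalfspace.exists_weight {k : ℕ} {S : Set (Fin k → ℝ)} (hS : IsHalfspace k S)
    (F : Finset (Fin k → ℝ)) (hF : ∀ x ∈ F, x ∈ S) :
    ∃ w : (Fin k → ℝ) →+ ℝ, ∀ x ∈ F, x ≠ 0 → 0 < w x := by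
  classical
  have h0 : (0 : Fin k → ℝ) ∈ S := (hS.inter.symm.subset rfl).1
  have hnot : (0 : Fin k → ℝ) ∉ convexHull ℝ (F.erase 0 : Set (Fin k → ℝ)) := by
    rw [Finset.mem_convexHull']
    rintro ⟨c, hc0, hc1, hsum⟩
    obtain ⟨y, hy, hcy⟩ : ∃ y ∈ F.erase 0, 0 < c y := by
      by_contra! h
      have := Finset.sum_nonpos h
      linarith
    rw [← Finset.add_sum_erase _ _ hy] at hsum
    have hyS : c y • y ∈ S := hS.smul_mem _ (hF y (Finset.mem_of_mem_erase hy)) _ hcy.le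
    have hrest : ∑ z ∈ (F.erase 0).erase y, c z • z ∈ S := by
      refine Finset.sum_induction _ (· ∈ S) (fun a b ha hb => hS.add_mem a ha b hb) h0
        fun z hz => ?_
      have hz' := Finset.mem_of_mem_erase hz
      exact hS.smul_mem _ (hF z (Finset.mem_of_mem_erase hz')) _ (hc0 z hz')
    have : c y • y ∈ S ∩ -S := by
      refine ⟨hyS, ?_⟩
      rwa [Set.mem_neg, ← eq_neg_of_add_eq_zero_right hsum]
    rw [hS.inter, Set.mem_singleton_iff, smul_eq_zero] at this
    exact this.elim hcy.ne' (Finset.ne_of_mem_erase hy)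
  obtain ⟨f, u, hu, hf⟩ := geometric_hahn_banach_point_closed (convex_convexHull ℝ _)
    (Set.Finite.isClosed_convexHull (𝕜 := ℝ) (F.erase 0).finite_toSet) hnot
  refine ⟨f.toLinearMap.toAddMonoidHom, fun x hx hx0 => ?_⟩
  have := hf x (subset_convexHull ℝ _ (Finset.mem_coe.2 (Finset.mem_erase.2 ⟨hx0, hx⟩)))
  rw [map_zero] at hu
  exact hu.trans this

namespace EllTwo

variable {ι ι' : Type*}

open Classical in
/-- The standard basis vector of `ℓ²(ι)` at `i`. -/
def basisVec (i : ι) : lp (fun _ : ι => ℂ) 2 := lp.single 2 i 1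

theorem inner_basisVec (i : ι) (f : lp (fun _ : ι => ℂ) 2) : inner ℂ (basisVec i) f = f i := by
  classical
  refine (lp.inner_single_left (𝕜 := ℂ) (G := fun _ : ι => ℂ) i (1 : ℂ) f).trans ?_
  rw [RCLike.inner_apply, map_one, mul_one]

open Classical in
theorem basisVec_apply (i j : ι) : basisVec j i = if i = j then (1 : ℂ) else 0 :=
  Pi.single_apply j (1 : ℂ) i

theorem orthonormal_basisVec : Orthonormal ℂ (basisVec : ι → lp (fun _ : ι => ℂ) 2) := by
  classical
  refine orthonormal_iff_ite.2 fun i j => ?_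
  rw [inner_basisVec, basisVec_apply]

theorem clm_ext {E : Type*} [NormedAddCommGroup E] [NormedSpace ℂ E]
    {S T : lp (fun _ : ι => ℂ) 2 →L[ℂ] E} (h : ∀ i, S (basisVec i) = T (basisVec i)) : S = T := by
  classical
  ext f
  have hf : HasSum (fun i => f i • basisVec i) f := by
    convert lp.hasSum_single (p := 2) ENNReal.ofNat_ne_top f using 2 with i
    refine (lp.single_smul (E := fun _ : ι => ℂ) 2 i (f i) (1 : ℂ)).symm.trans ?_
    rw [smul_eq_mul, mul_one]
  have hS := S.hasSum hf
  have hT := T.hasSum hf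
  simp only [map_smul, h] at hS hT
  exact hS.unique hT

/-- The isometry `ℓ²(ι) → ℓ²(ι')` induced by an injection of the index sets. -/
def push {g : ι → ι'} (hg : Function.Injective g) :
    lp (fun _ : ι => ℂ) 2 →L[ℂ] lp (fun _ : ι' => ℂ) 2 :=
  (orthonormal_basisVec.comp g hg).orthogonalFamily.linearIsometry.toContinuousLinearMap

theorem push_basisVec {g : ι → ι'} (hg : Function.Injective g) (i : ι) :
    push hg (basisVec i) = basisVec (g i) := by
  classical
  exact ((orthonormal_basisVec.comp g hg).orthogonalFamily.linearIsometry_apply_single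
    (1 : ℂ)).trans (one_smul ℂ _)

theorem norm_push_le {g : ι → ι'} (hg : Function.Injective g) : ‖push hg‖ ≤ 1 :=
  LinearIsometry.norm_toContinuousLinearMap_le _

open Classical in
theorem adjoint_push_basisVec_apply {g : ι → ι'} (hg : Function.Injective g) (i : ι) (j : ι') :
    (push hg).adjoint (basisVec j) i = if g i = j then 1 else 0 := by
  rw [← inner_basisVec, ContinuousLinearMap.adjoint_inner_right, push_basisVec, inner_basisVec,
    basisVec_apply]

theorem adjoint_push_basisVec {g : ι → ι'} (hg : Function.Injective g) (i : ι) :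
    (push hg).adjoint (basisVec (g i)) = basisVec i := by
  classical
  ext j
  rw [adjoint_push_basisVec_apply, basisVec_apply, hg.eq_iff]

theorem adjoint_push_basisVec_of_notMem {g : ι → ι'} (hg : Function.Injective g) {j : ι'}
    (hj : j ∉ Set.range g) : (push hg).adjoint (basisVec j) = 0 := by
  classical
  ext i
  rw [adjoint_push_basisVec_apply, if_neg fun h => hj ⟨i, h⟩]
  rfl

end EllTwo

namespace EllOne

open EllTwo

variable {M : Type*} [AddCommMonoid M] [IsLeftCancelAdd M] {a b c : Type*}

/-- Columns of elements of `ℓ²(M)`. -/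
abbrev Column (a M : Type*) : Type _ := lp (fun _ : a × M => ℂ) 2

theorem injective_mk_add (i : a) (κ : M) : Function.Injective fun μ : M => (i, κ + μ) :=
  fun _ _ h => add_left_cancel (Prod.ext_iff.1 h).2

/-- The shift by `κ` from the `j`-th copy of `ℓ²(M)` to the `i`-th copy. -/
def blockShift (i : a) (j : b) (κ : M) :
    Column b M →L[ℂ] Column a M :=
  (push (injective_mk_add i κ)).comp (push (Prod.mk_right_injective j)).adjoint

theorem blockShift_basisVec (i : a) (j : b) (κ μ : M) :
    blockShift i j κ (basisVec (j, μ)) = basisVec (i, κ + μ) := by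
  rw [blockShift, ContinuousLinearMap.comp_apply,
    adjoint_push_basisVec (Prod.mk_right_injective j) μ, push_basisVec]

theorem blockShift_basisVec_of_ne (i : a) {j j' : b} (h : j ≠ j') (κ μ : M) :
    blockShift i j κ (basisVec (j', μ)) = 0 := by
  rw [blockShift, ContinuousLinearMap.comp_apply, adjoint_push_basisVec_of_notMem, map_zero]
  rintro ⟨ν, hν⟩
  exact h (Prod.ext_iff.1 hν).1

theorem norm_blockShift_le (i : a) (j : b) (κ : M) : ‖blockShift i j κ‖ ≤ 1 := by
  refine (ContinuousLinearMap.opNorm_comp_le _ _).trans (mul_le_one₀ (norm_push_le _)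
    (norm_nonneg _) ?_)
  rw [LinearIsometryEquiv.norm_map]
  exact norm_push_le _

theorem blockShift_comp_blockShift (i : a) (j : b) (l : c) (κ κ' : M) :
    (blockShift i j κ).comp (blockShift j l κ') = blockShift i l (κ + κ') := by
  refine EllTwo.clm_ext fun ⟨l', μ⟩ => ?_
  rw [ContinuousLinearMap.comp_apply]
  by_cases h : l = l'
  · subst h
    rw [blockShift_basisVec, blockShift_basisVec, blockShift_basisVec, add_assoc]
  · rw [blockShift_basisVec_of_ne j h, blockShift_basisVec_of_ne i h, map_zero]

theorem blockShift_comp_blockShift_of_ne (i : a) {j j' : b} (h : j ≠ j') (l : c) (κ κ' : M) :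
    (blockShift i j κ).comp (blockShift j' l κ') = 0 := by
  refine EllTwo.clm_ext fun ⟨l', μ⟩ => ?_
  rw [ContinuousLinearMap.comp_apply]
  by_cases hl : l = l'
  · subst hl
    rw [blockShift_basisVec, blockShift_basisVec_of_ne i h]
    rfl
  · rw [blockShift_basisVec_of_ne j' hl, map_zero]
    rfl

/-- The scalar Toeplitz operator with symbol `x`, acting from the `j`-th copy of `ℓ²(M)` to the
`i`-th copy. -/
def blockToeplitz (i : a) (j : b) :
    EllOne M →L[ℂ] Column b M →L[ℂ] Column a M :=
  lift (blockShift i j) (norm_blockShift_le i j)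

theorem blockToeplitz_comp (i : a) (j : b) (l : c) (x y : EllOne M) :
    (blockToeplitz i j x).comp (blockToeplitz j l y) = blockToeplitz i l (x * y) := by
  have h (κ : M) (y : EllOne M) : (blockShift i j κ).comp (blockToeplitz j l y) =
      blockToeplitz i l (delta κ * y) := by
    have : (ContinuousLinearMap.compL ℂ (Column c M) (Column b M) (Column a M)
        (blockShift i j κ)).comp (blockToeplitz j l) =
        (blockToeplitz i l).comp (mulCLM (delta κ)) :=
      clm_ext fun κ' => by simp [blockToeplitz, blockShift_comp_blockShift]
    exact congr($this y)
  have : ((ContinuousLinearMap.compL ℂ (Column c M) (Column b M) (Column a M)).flip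
      (blockToeplitz j l y)).comp
      (blockToeplitz i j) = (blockToeplitz i l).comp (mulCLM.flip y) :=
    clm_ext fun κ => by simpa [blockToeplitz, ← mul_def] using h κ y
  exact congr($this x)

theorem blockToeplitz_comp_of_ne (i : a) {j j' : b} (hj : j ≠ j') (l : c) (x y : EllOne M) :
    (blockToeplitz i j x).comp (blockToeplitz j' l y) = 0 := by
  have h (κ : M) (y : EllOne M) : (blockShift i j κ).comp (blockToeplitz j' l y) = 0 := by
    have : (ContinuousLinearMap.compL ℂ (Column c M) (Column b M) (Column a M)
        (blockShift i j κ)).comp (blockToeplitz j' l) = 0 :=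
      clm_ext fun κ' => by simp [blockToeplitz, blockShift_comp_blockShift_of_ne _ hj]
    exact congr($this y)
  have : ((ContinuousLinearMap.compL ℂ (Column c M) (Column b M) (Column a M)).flip
      (blockToeplitz j' l y)).comp
      (blockToeplitz i j) = 0 :=
    clm_ext fun κ => by simpa [blockToeplitz] using h κ y
  exact congr($this x)

theorem blockToeplitz_one_basisVec (i : a) (j : b) (μ : M) :
    blockToeplitz i j 1 (basisVec (j, μ)) = basisVec (i, μ) := by
  rw [one_def, blockToeplitz, lift_delta, blockShift_basisVec, zero_add]

theorem blockToeplitz_basisVec_of_ne (i : a) {j j' : b} (h : j ≠ j') (x : EllOne M) (μ : M) :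
    blockToeplitz i j x (basisVec (j', μ)) = 0 := by
  have : (blockToeplitz i j).flip (basisVec (j', μ)) = 0 := clm_ext fun κ => by
    rw [ContinuousLinearMap.flip_apply, blockToeplitz, lift_delta, blockShift_basisVec_of_ne i h]
    rfl
  exact congr($this x)

theorem hasSum_blockToeplitz_basisVec_apply (i : a) (j : b) (x : EllOne M) (μ : M) (q : a × M) :
    HasSum (fun κ => x κ * basisVec (i, κ + μ) q) (blockToeplitz i j x (basisVec (j, μ)) q) := by
  have h := ((innerSL ℂ (basisVec q)).comp
    (ContinuousLinearMap.apply ℂ (Column a M) (basisVec (j, μ)))).hasSum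
    (hasSum_lift (blockShift i j) (norm_blockShift_le i j) x)
  simp only [map_smul, ContinuousLinearMap.comp_apply, ContinuousLinearMap.apply_apply,
    blockShift_basisVec, innerSL_apply_apply, inner_basisVec, smul_eq_mul] at h
  exact h

theorem blockToeplitz_basisVec_apply_of_forall_ne (i : a) (j : b) (x : EllOne M) {μ : M}
    {q : a × M} (h : ∀ κ, q ≠ (i, κ + μ)) : blockToeplitz i j x (basisVec (j, μ)) q = 0 := by
  refine (hasSum_blockToeplitz_basisVec_apply i j x μ q).unique ?_
  simp only [basisVec_apply, if_neg (h _), mul_zero]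
  exact hasSum_zero

theorem blockToeplitz_basisVec_apply_add (i : a) (j : b) (x : EllOne M) (κ μ : M)
    [IsRightCancelAdd M] : blockToeplitz i j x (basisVec (j, μ)) (i, κ + μ) = x κ := by
  refine (hasSum_blockToeplitz_basisVec_apply i j x μ _).unique ?_
  convert hasSum_single κ fun κ' hκ' => ?_ using 1
  · simp [basisVec_apply]
  · simp [basisVec_apply, hκ'.symm]

variable [Fintype a] [Fintype b] [Fintype c]

/-- The block Toeplitz operator with matrix symbol `F`. -/
def toeplitz (F : Matrix a b (EllOne M)) :
    Column b M →L[ℂ] Column a M :=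
  ∑ i, ∑ j, blockToeplitz i j (F i j)

theorem toeplitz_add (F G : Matrix a b (EllOne M)) :
    toeplitz (F + G) = toeplitz F + toeplitz G := by
  simp [toeplitz, Finset.sum_add_distrib]

theorem toeplitz_mul (F : Matrix a b (EllOne M)) (G : Matrix b c (EllOne M)) :
    toeplitz (F * G) = (toeplitz F).comp (toeplitz G) := by
  classical
  simp only [toeplitz, Matrix.mul_apply, map_sum, ContinuousLinearMap.finsetSum_comp]
  simp only [ContinuousLinearMap.comp_finsetSum]
  refine Finset.sum_congr rfl fun i _ => ?_
  rw [Finset.sum_comm]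
  refine Finset.sum_congr rfl fun j _ => ?_
  rw [Finset.sum_eq_single j]
  · simp only [blockToeplitz_comp]
  · intro j' _ hj'
    exact Finset.sum_eq_zero fun l _ => blockToeplitz_comp_of_ne (M := M) i hj'.symm l _ _
  · simp

theorem toeplitz_basisVec (F : Matrix a b (EllOne M)) (j : b) (μ : M) :
    toeplitz F (basisVec (j, μ)) = ∑ i, blockToeplitz i j (F i j) (basisVec (j, μ)) := by
  classical
  simp only [toeplitz, _root_.sum_apply]
  refine Finset.sum_congr rfl fun i _ => ?_
  rw [Finset.sum_eq_single j]
  · intro j' _ hj'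
    exact blockToeplitz_basisVec_of_ne i hj' _ _
  · simp

theorem toeplitz_basisVec_apply (F : Matrix a b (EllOne M)) (j : b) (μ : M) (i : a) (ν : M) :
    toeplitz F (basisVec (j, μ)) (i, ν) = blockToeplitz i j (F i j) (basisVec (j, μ)) (i, ν) := by
  rw [toeplitz_basisVec, lp.coeFn_sum, Finset.sum_apply, Finset.sum_eq_single i]
  · intro i' _ hi'
    exact blockToeplitz_basisVec_apply_of_forall_ne i' j _ fun κ h => hi' (Prod.ext_iff.1 h).1.symm
  · simp

theorem toeplitz_one [DecidableEq a] :
    toeplitz (1 : Matrix a a (EllOne M)) = ContinuousLinearMap.id ℂ (Column a M) := by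
  refine EllTwo.clm_ext fun ⟨j, μ⟩ => ?_
  rw [toeplitz_basisVec, Finset.sum_eq_single j]
  · rw [Matrix.one_apply_eq, blockToeplitz_one_basisVec, ContinuousLinearMap.id_apply]
  · intro i _ hi
    rw [Matrix.one_apply_ne hi, map_zero]
    rfl
  · simp

end EllOne

section Completion

/-- A matrix `[A -B]` that is column equivalent to `[0 1]` can be completed to a pair of mutually
inverse block matrices. -/
theorem ColEquiv.exists_blocks {R : Type*} [CommRing R] {m p : ℕ}
    {A : Matrix (Fin p) (Fin m) R} {B : Matrix (Fin p) (Fin p) R}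
    (h : ColEquiv (Matrix.fromCols A (-B)) (Matrix.fromCols 0 1)) :
    ∃ (C : Matrix (Fin p) (Fin m) R) (D : Matrix (Fin m) (Fin m) R)
      (X : Matrix (Fin m) (Fin m) R) (Y : Matrix (Fin m) (Fin p) R)
      (P : Matrix (Fin m) (Fin p) R) (Q : Matrix (Fin p) (Fin p) R),
      X * D + Y * C = 1 ∧ A * D = B * C ∧ D * X + P * A = 1 ∧ D * Y = P * B ∧
      C * X + Q * A = 0 ∧ C * Y = 1 + Q * B := by
  obtain ⟨U, hU, hAU⟩ := h
  obtain ⟨V, hVU, hUV⟩ : ∃ V, V * U = 1 ∧ U * V = 1 :=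
    ⟨U⁻¹, Matrix.nonsing_inv_mul U hU, Matrix.mul_nonsing_inv U hU⟩
  have hAV : Matrix.fromCols A (-B) =
      Matrix.fromCols (0 : Matrix (Fin p) (Fin m) R) (1 : Matrix (Fin p) (Fin p) R) * V := by
    rw [hAU, Matrix.mul_assoc, hUV, Matrix.mul_one]
  rw [← Matrix.fromBlocks_toBlocks U, ← Matrix.fromBlocks_toBlocks V] at hVU hUV
  rw [← Matrix.fromBlocks_toBlocks V, Matrix.fromCols_mul_fromBlocks,
    Matrix.fromCols_ext_iff] at hAV
  simp only [Matrix.zero_mul, Matrix.one_mul, zero_add] at hAV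
  rw [← hAV.1, ← hAV.2, Matrix.fromBlocks_multiply, ← Matrix.fromBlocks_one,
    Matrix.fromBlocks_inj] at hVU hUV
  refine ⟨U.toBlocks₂₁, U.toBlocks₁₁, V.toBlocks₁₁, V.toBlocks₁₂, U.toBlocks₁₂, U.toBlocks₂₂,
    hVU.1, ?_, hUV.1, ?_, hUV.2.2.1, ?_⟩
  · simpa [← sub_eq_add_neg, sub_eq_zero] using hVU.2.2.1
  · simpa [← sub_eq_add_neg, sub_eq_zero] using hUV.2.1
  · simpa [← sub_eq_add_neg, sub_eq_iff_eq_add] using hUV.2.2.2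

end Completion

theorem RepresentsToeplitz.eq_toeplitz {k : ℕ} {S Λ : Set (Fin k → ℝ)} [AddCommMonoid ↥(S ∩ Λ)]
    [IsCancelAdd ↥(S ∩ Λ)] {φ : ↥(S ∩ Λ) →+ (Fin k → ℝ)} (hφ : ∀ μ, φ μ = μ) {m n : ℕ}
    {F : Matrix (Fin m) (Fin n) (EllOne ↥(S ∩ Λ))}
    {T : BesCol k n (S ∩ Λ) →L[ℂ] BesCol k m (S ∩ Λ)}
    (hT : RepresentsToeplitz k S Λ m n (F.map (expSeries φ)) T) : T = EllOne.toeplitz F := by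
  have hinj : Function.Injective φ := fun μ ν h => Subtype.ext (by rw [← hφ, ← hφ, h])
  refine EllTwo.clm_ext fun ⟨j, μ⟩ => ?_
  ext ⟨i, ν⟩
  have h := hT j μ i ν
  rw [Matrix.map_apply] at h
  have h' : T (EllTwo.basisVec (j, μ)) (i, ν) =
      bohrCoeff k (expSeries φ (F i j)) (φ ν - φ μ) := by
    rw [← EllTwo.inner_basisVec, hφ, hφ, ← h, EllTwo.basisVec, EllTwo.basisVec]
    congr!
  rw [h', EllOne.toeplitz_basisVec_apply]
  by_cases hν : ∃ κ, κ + μ = ν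
  · obtain ⟨κ, rfl⟩ := hν
    rw [EllOne.blockToeplitz_basisVec_apply_add, map_add, add_sub_cancel_right,
      bohrCoeff_expSeries_apply hinj]
  · rw [bohrCoeff_expSeries_of_notMem, EllOne.blockToeplitz_basisVec_apply_of_forall_ne]
    · rintro κ h
      exact hν ⟨κ, (Prod.ext_iff.1 h).2.symm⟩
    · rintro ⟨κ, hκ⟩
      exact hν ⟨κ, hinj (by rw [map_add, hκ, sub_add_cancel])⟩

theorem EllOne.exists_coprime_factorization {M : Type*} [AddCommMonoid M] [IsLeftCancelAdd M]
    (hM : ∀ F : Finset M, ∃ w : M →+ ℝ, ∀ μ ∈ F, μ ≠ 0 → 0 < w μ) {m p : ℕ}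
    {A : Matrix (Fin p) (Fin m) (EllOne M)} {B : Matrix (Fin p) (Fin p) (EllOne M)}
    {Y₁ : Matrix (Fin m) (Fin p) (EllOne M)} {Y₂ : Matrix (Fin p) (Fin p) (EllOne M)}
    (hAB : A * Y₁ + B * Y₂ = 1) :
    ∃ (C : Matrix (Fin p) (Fin m) (EllOne M)) (D : Matrix (Fin m) (Fin m) (EllOne M))
      (X : Matrix (Fin m) (Fin m) (EllOne M)) (Y : Matrix (Fin m) (Fin p) (EllOne M)),
      X * D + Y * C = 1 ∧ A * D = B * C ∧
      ∀ (f : Column (Fin m) M) (g : Column (Fin p) M),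
        toeplitz A f = toeplitz B g ↔
          ∃ h : Column (Fin m) M, toeplitz D h = f ∧ toeplitz C h = g := by
  have hN : Matrix.fromCols A (-B) * Matrix.fromRows Y₁ (-Y₂) = 1 := by
    rw [Matrix.fromCols_mul_fromRows, Matrix.neg_mul, Matrix.mul_neg, neg_neg, hAB]
  obtain ⟨C, D, X, Y, P, Q, hXY, hAD, hDX, hDY, hCX, hCY⟩ := (colEquiv_fromCols hM hN).exists_blocks
  refine ⟨C, D, X, Y, hXY, hAD, fun f g => ⟨fun h => ?_, ?_⟩⟩
  · replace hDX := congr($(congrArg toeplitz hDX) f)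
    replace hDY := congr($(congrArg toeplitz hDY) g)
    replace hCX := congr($(congrArg toeplitz hCX) f)
    replace hCY := congr($(congrArg toeplitz hCY) g)
    have h0 : toeplitz (0 : Matrix (Fin p) (Fin m) (EllOne M)) = 0 := by simp [toeplitz]
    simp only [toeplitz_add, toeplitz_mul, toeplitz_one, h0, _root_.add_apply,
      ContinuousLinearMap.comp_apply, ContinuousLinearMap.id_apply,
      _root_.zero_apply, h] at hDX hDY hCX hCY
    refine ⟨toeplitz X f + toeplitz Y g, ?_, ?_⟩
    · rw [map_add, hDY, hDX]
    · rw [map_add, hCY, add_left_comm, hCX, add_zero]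
  · rintro ⟨h, rfl, rfl⟩
    rw [← ContinuousLinearMap.comp_apply, ← ContinuousLinearMap.comp_apply, ← toeplitz_mul,
      ← toeplitz_mul, hAD]

theorem expSeries_injective {k : ℕ} {M : Type*} [AddCommMonoid M] {φ : M →+ (Fin k → ℝ)}
    (hφ : Function.Injective φ) : Function.Injective (expSeries φ) := by
  intro c d h
  refine Subtype.ext (funext fun μ => ?_)
  have := bohrCoeff_expSeries_apply hφ c μ
  rw [h, bohrCoeff_expSeries_apply hφ] at this
  exact this.symm

theorem exists_map_expSeries {k : ℕ} {M : Type*} [AddCommMonoid M] {φ : M →+ (Fin k → ℝ)}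
    (hφ : Function.Injective φ) {a b : Type*} {F : Matrix a b (APB k)}
    (hF : ∀ i j, APWmem k (Set.range φ) (F i j)) :
    ∃ G : Matrix a b (EllOne M), F = G.map (expSeries φ) := by
  choose G hG using fun i j => (APWmem_iff_exists_expSeries hφ _).1 (hF i j)
  exact ⟨Matrix.of G, Matrix.ext fun i j => (hG i j).symm⟩

theorem APWmem_map_expSeries {k : ℕ} {M : Type*} [AddCommMonoid M] {φ : M →+ (Fin k → ℝ)}
    (hφ : Function.Injective φ) {a b : Type*} (G : Matrix a b (EllOne M)) (i : a) (j : b) :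
    APWmem k (Set.range φ) (G.map (expSeries φ) i j) :=
  (APWmem_iff_exists_expSeries hφ _).2 ⟨_, rfl⟩

theorem APWmem.mono {k : ℕ} {Δ Δ' : Set (Fin k → ℝ)} {f : APB k} (hf : APWmem k Δ f)
    (h : Δ ⊆ Δ') : APWmem k Δ' f :=
  ⟨⟨hf.1.1, hf.1.2.trans h⟩, hf.2⟩

/-- The submonoid of a subgroup consisting of its elements in a halfspace. -/
def IsHalfspace.interAddSubmonoid {k : ℕ} {S : Set (Fin k → ℝ)} (hS : IsHalfspace k S)
    (Lam : AddSubgroup (Fin k → ℝ)) : AddSubmonoid (Fin k → ℝ) where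
  carrier := S ∩ Lam
  zero_mem' := ⟨(hS.inter.symm.subset rfl).1, Lam.zero_mem⟩
  add_mem' hx hy := ⟨hS.add_mem _ hx.1 _ hy.1, Lam.add_mem hx.2 hy.2⟩

/-- **Lemma 5.3.**  Let `S ⊂ ℝ^k` be a halfspace, `Λ'` an additive subgroup of
`ℝ^k`, `A ∈ (APW^k_{Λ'∩S})^{p×m}`, `B ∈ (APW^k_{Λ'∩S})^{p×p}` invertible in
`(APW^k_{Λ'})^{p×p}`, and suppose `(A, B)` is a left coprime pair over
`APW^k_{Λ'∩S}`.  Then (i) `W = B⁻¹A` admits a right coprime factorization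
`W = C D⁻¹` over `APW^k_{Λ'∩S}` (equivalently `A D = B C`) with `D` invertible
in `(APW^k_{Λ'})^{m×m}`; and (ii) the kernel-range identity
`Ker [T(A) −T(B)] = Im [T(D); T(C)]` holds for the corresponding Toeplitz
operators. -/
theorem coprime_factorization_kernel_range (k p m : ℕ)
    (S : Set (Fin k → ℝ)) (hS : IsHalfspace k S)
    (Lam : AddSubgroup (Fin k → ℝ))
    (A : Matrix (Fin p) (Fin m) (APB k))
    (hA : ∀ i j, APWmem k ((↑Lam : Set (Fin k → ℝ)) ∩ S) (A i j))
    (B : Matrix (Fin p) (Fin p) (APB k))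
    (hB : ∀ i j, APWmem k ((↑Lam : Set (Fin k → ℝ)) ∩ S) (B i j))
    (hBinv : ∃ Binv : Matrix (Fin p) (Fin p) (APB k),
      (∀ i j, APWmem k (↑Lam) (Binv i j)) ∧ B * Binv = 1 ∧ Binv * B = 1)
    (hcoprime : ∃ (Y₁ : Matrix (Fin m) (Fin p) (APB k))
        (Y₂ : Matrix (Fin p) (Fin p) (APB k)),
      (∀ i j, APWmem k ((↑Lam : Set (Fin k → ℝ)) ∩ S) (Y₁ i j)) ∧
      (∀ i j, APWmem k ((↑Lam : Set (Fin k → ℝ)) ∩ S) (Y₂ i j)) ∧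
      A * Y₁ + B * Y₂ = 1) :
    ∃ (C : Matrix (Fin p) (Fin m) (APB k)) (D : Matrix (Fin m) (Fin m) (APB k)),
      (∀ i j, APWmem k ((↑Lam : Set (Fin k → ℝ)) ∩ S) (C i j)) ∧
      (∀ i j, APWmem k ((↑Lam : Set (Fin k → ℝ)) ∩ S) (D i j)) ∧
      (∃ Dinv : Matrix (Fin m) (Fin m) (APB k),
        (∀ i j, APWmem k (↑Lam) (Dinv i j)) ∧ D * Dinv = 1 ∧ Dinv * D = 1) ∧
      (∃ (X : Matrix (Fin m) (Fin m) (APB k)) (Y : Matrix (Fin m) (Fin p) (APB k)),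
        (∀ i j, APWmem k ((↑Lam : Set (Fin k → ℝ)) ∩ S) (X i j)) ∧
        (∀ i j, APWmem k ((↑Lam : Set (Fin k → ℝ)) ∩ S) (Y i j)) ∧
        X * D + Y * C = 1) ∧
      A * D = B * C ∧
      (∀ (TA : BesCol k m (S ∩ ↑Lam) →L[ℂ] BesCol k p (S ∩ ↑Lam))
         (TB : BesCol k p (S ∩ ↑Lam) →L[ℂ] BesCol k p (S ∩ ↑Lam))
         (TC : BesCol k m (S ∩ ↑Lam) →L[ℂ] BesCol k p (S ∩ ↑Lam))
         (TD : BesCol k m (S ∩ ↑Lam) →L[ℂ] BesCol k m (S ∩ ↑Lam)),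
        RepresentsToeplitz k S (↑Lam) p m A TA →
        RepresentsToeplitz k S (↑Lam) p p B TB →
        RepresentsToeplitz k S (↑Lam) p m C TC →
        RepresentsToeplitz k S (↑Lam) m m D TD →
        ∀ (f : BesCol k m (S ∩ ↑Lam)) (g : BesCol k p (S ∩ ↑Lam)),
          TA f = TB g ↔ ∃ h : BesCol k m (S ∩ ↑Lam), TD h = f ∧ TC h = g) := by
  let : AddCommMonoid ↥(S ∩ (Lam : Set (Fin k → ℝ))) := (hS.interAddSubmonoid Lam).toAddCommMonoid
  have : IsCancelAdd ↥(S ∩ (Lam : Set (Fin k → ℝ))) :=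
    inferInstanceAs (IsCancelAdd (hS.interAddSubmonoid Lam))
  obtain ⟨φ, hφ⟩ : ∃ φ : ↥(S ∩ (Lam : Set (Fin k → ℝ))) →+ (Fin k → ℝ), ∀ μ, φ μ = μ :=
    ⟨(hS.interAddSubmonoid Lam).subtype, fun _ => rfl⟩
  have hinj : Function.Injective φ := fun μ ν h => Subtype.ext (by rw [← hφ, ← hφ, h])
  have hrange : (Lam : Set (Fin k → ℝ)) ∩ S = Set.range φ := by
    rw [Set.inter_comm, funext hφ, Subtype.range_coe]
  have hsub : Set.range φ ⊆ Set.range Lam.subtype := by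
    rw [← hrange, Lam.coe_subtype, Subtype.range_coe]
    exact Set.inter_subset_left
  have hLam : (Lam : Set (Fin k → ℝ)) = Set.range Lam.subtype := by
    rw [Lam.coe_subtype, Subtype.range_coe]
  have hM (F : Finset ↥(S ∩ (Lam : Set (Fin k → ℝ)))) :
      ∃ w : ↥(S ∩ (Lam : Set (Fin k → ℝ))) →+ ℝ, ∀ μ ∈ F, μ ≠ 0 → 0 < w μ := by
    obtain ⟨w, hw⟩ := hS.exists_weight (F.map ⟨φ, hinj⟩) fun x hx => by
      obtain ⟨μ, -, rfl⟩ := Finset.mem_map.1 hx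
      rw [Function.Embedding.coeFn_mk, hφ]
      exact μ.2.1
    refine ⟨w.comp φ, fun μ hμ h0 => hw _ (Finset.mem_map_of_mem _ hμ) ?_⟩
    exact (map_ne_zero_iff φ hinj).2 h0
  obtain ⟨Binv, hBinv, hBB, hBB'⟩ := hBinv
  obtain ⟨Y₁, Y₂, hY₁, hY₂, hAB⟩ := hcoprime
  rw [hrange] at hA hB hY₁ hY₂ ⊢
  obtain ⟨A, rfl⟩ := exists_map_expSeries hinj hA
  obtain ⟨B, rfl⟩ := exists_map_expSeries hinj hB
  obtain ⟨Y₁, rfl⟩ := exists_map_expSeries hinj hY₁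
  obtain ⟨Y₂, rfl⟩ := exists_map_expSeries hinj hY₂
  replace hAB : A * Y₁ + B * Y₂ = 1 := by
    refine Matrix.map_injective (expSeries_injective hinj) ?_
    dsimp only
    rwa [Matrix.map_add _ (map_add _), Matrix.map_mul, Matrix.map_mul,
      Matrix.map_one _ (map_zero _) (map_one _)]
  obtain ⟨C, D, X, Y, hXY, hAD, hT⟩ := EllOne.exists_coprime_factorization hM hAB
  replace hXY : X.map (expSeries φ) * D.map (expSeries φ) +
      Y.map (expSeries φ) * C.map (expSeries φ) = 1 := by
    rw [← Matrix.map_mul, ← Matrix.map_mul, ← Matrix.map_add _ (map_add _), hXY,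
      Matrix.map_one _ (map_zero _) (map_one _)]
  replace hAD : A.map (expSeries φ) * D.map (expSeries φ) =
      B.map (expSeries φ) * C.map (expSeries φ) := by
    rw [← Matrix.map_mul, ← Matrix.map_mul, hAD]
  refine ⟨C.map (expSeries φ), D.map (expSeries φ), APWmem_map_expSeries hinj C,
    APWmem_map_expSeries hinj D,
    ⟨X.map (expSeries φ) + Y.map (expSeries φ) * Binv * A.map (expSeries φ), ?_, ?_⟩,
    ⟨X.map (expSeries φ), Y.map (expSeries φ), APWmem_map_expSeries hinj X,
      APWmem_map_expSeries hinj Y, hXY⟩, hAD, ?_⟩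
  · have hLift {a b : Type} (G : Matrix a b (EllOne ↥(S ∩ (Lam : Set (Fin k → ℝ))))) :
        ∃ H : Matrix a b (EllOne Lam), G.map (expSeries φ) = H.map (expSeries Lam.subtype) :=
      exists_map_expSeries Lam.subtype_injective fun i j =>
        (APWmem_map_expSeries hinj G i j).mono hsub
    rw [hLam] at hBinv
    obtain ⟨B', rfl⟩ := exists_map_expSeries Lam.subtype_injective hBinv
    obtain ⟨A', hA'⟩ := hLift A
    obtain ⟨X', hX'⟩ := hLift X
    obtain ⟨Y', hY'⟩ := hLift Y
    rw [hA', hX', hY', hLam, ← Matrix.map_mul, ← Matrix.map_mul, ← Matrix.map_add _ (map_add _)]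
    exact APWmem_map_expSeries Lam.subtype_injective _
  · rw [mul_eq_one_comm, and_self]
    rw [Matrix.add_mul, Matrix.mul_assoc, hAD, Matrix.mul_assoc, ← Matrix.mul_assoc Binv, hBB',
      Matrix.one_mul, hXY]
  · intro TA TB TC TD hTA hTB hTC hTD
    rw [hTA.eq_toeplitz hφ, hTB.eq_toeplitz hφ, hTC.eq_toeplitz hφ, hTD.eq_toeplitz hφ]
    exact hT
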